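/- For integers n, m ≥ 3 and k₁ = k₂ = 1: 3√3/(2^{10}·7²·√(min(n,m))) < (Vol S̃q / Vol P̃os)^{1/D_𝓜} < 2^{12}·5²·6^{1/2}·10^{2/9}/(3³·√(min(n,m)+1)), where D_𝓜 = C(n+1,2)·C(m+1,2) − 1 = (n(n+1)m(m+1) − 4)/4. In particular, (Vol S̃q / Vol P̃os)^{1/D_𝓜} = Θ(min(n,m)^{−1/2}). -/

import Mathlib

open MeasureTheory MvPolynomial

noncomputable section

namespace BiformPaper

/-- The weight function on the variables: the `x`-variables get weight `(1,0)` and the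
`y`-variables get weight `(0,1)`. -/
def bw (n m : ℕ) : Fin n ⊕ Fin m → ℕ × ℕ := Sum.elim (fun _ => (1, 0)) (fun _ => (0, 1))

/-- The set of biforms of bidegree `(k₁, k₂)`: real polynomials in
`x = (x₁, …, xₙ)` and `y = (y₁, …, y_m)`, homogeneous of degree `k₁` in `x` and of degree
`k₂` in `y`. -/
def Biform (n m k₁ k₂ : ℕ) : Set (MvPolynomial (Fin n ⊕ Fin m) ℝ) :=
  {f | MvPolynomial.IsWeightedHomogeneous (bw n m) f (k₁, k₂)}

/-- Evaluation of a polynomial at a point `(x, y) ∈ ℝⁿ × ℝᵐ`. -/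
def beval {n m : ℕ} (f : MvPolynomial (Fin n ⊕ Fin m) ℝ) (x : Fin n → ℝ) (y : Fin m → ℝ) : ℝ :=
  eval (Sum.elim x y) f

/-- The Euclidean unit sphere `S^{n-1}` in `ℝⁿ`. -/
def unitSphere (n : ℕ) : Set (Fin n → ℝ) := {x | ∑ i, x i ^ 2 = 1}

/-- `σ` is the normalized uniform measure on the unit sphere `S^{n-1} ⊆ ℝⁿ`, i.e., the
unique rotation-invariant Borel probability measure concentrated on the sphere. -/
structure IsSphereMeasure (n : ℕ) (σ : Measure (Fin n → ℝ)) : Prop where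
  prob : IsProbabilityMeasure σ
  onSphere : σ (unitSphere n)ᶜ = 0
  invariant : ∀ Q : Matrix (Fin n) (Fin n) ℝ, Q * Q.transpose = 1 → σ.map Q.mulVec = σ

/-- The average `∫_T f dσ` of `f` over `T = S^{n-1} × S^{m-1}` (with `σ` the product of the
normalized sphere measures `σ₁`, `σ₂`). -/
def bavg {n m : ℕ} (σ₁ : Measure (Fin n → ℝ)) (σ₂ : Measure (Fin m → ℝ))
    (f : MvPolynomial (Fin n ⊕ Fin m) ℝ) : ℝ :=
  ∫ x, ∫ y, beval f x y ∂σ₂ ∂σ₁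

/-- The `L²(σ)` inner product `⟨f, g⟩ = ∫_T f·g dσ` on biforms. -/
def bip {n m : ℕ} (σ₁ : Measure (Fin n → ℝ)) (σ₂ : Measure (Fin m → ℝ))
    (f g : MvPolynomial (Fin n ⊕ Fin m) ℝ) : ℝ :=
  ∫ x, ∫ y, beval f x y * beval g x y ∂σ₂ ∂σ₁

/-- The cone `Pos^{(n,m)}_{(2k₁,2k₂)}` of nonnegative biforms of bidegree `(2k₁, 2k₂)`. -/
def PosSet (n m k₁ k₂ : ℕ) : Set (MvPolynomial (Fin n ⊕ Fin m) ℝ) :=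
  {f | f ∈ Biform n m (2 * k₁) (2 * k₂) ∧ ∀ x y, 0 ≤ beval f x y}

/-- The cone `Sq^{(n,m)}_{(2k₁,2k₂)}` of finite sums of squares of biforms of bidegree
`(k₁, k₂)`. -/
def SqSet (n m k₁ k₂ : ℕ) : Set (MvPolynomial (Fin n ⊕ Fin m) ℝ) :=
  {f | ∃ (N : ℕ) (g : Fin N → MvPolynomial (Fin n ⊕ Fin m) ℝ),
      (∀ i, g i ∈ Biform n m k₁ k₂) ∧ f = ∑ i, g i ^ 2}

/-- The cone `Lf^{(n,m)}_{(2k₁,2k₂)}` of finite sums of products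
`ℓᵢ(x)^{2k₁} · ℓ′ᵢ(y)^{2k₂}` of even powers of linear forms. -/
def LfSet (n m k₁ k₂ : ℕ) : Set (MvPolynomial (Fin n ⊕ Fin m) ℝ) :=
  {f | ∃ (N : ℕ) (a : Fin N → Fin n → ℝ) (b : Fin N → Fin m → ℝ),
      f = ∑ r, (∑ i, C (a r i) * X (Sum.inl i)) ^ (2 * k₁) *
               (∑ j, C (b r j) * X (Sum.inr j)) ^ (2 * k₂)}

/-- The biform `q = (x₁² + ⋯ + xₙ²)^{k₁} · (y₁² + ⋯ + y_m²)^{k₂}`. -/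
def qpoly (n m k₁ k₂ : ℕ) : MvPolynomial (Fin n ⊕ Fin m) ℝ :=
  (∑ i : Fin n, X (Sum.inl i) ^ 2) ^ k₁ * (∑ j : Fin m, X (Sum.inr j) ^ 2) ^ k₂

/-- The hyperplane `𝓜` of biforms of bidegree `(2k₁, 2k₂)` with average `0` on `T`. -/
def MSet (n m k₁ k₂ : ℕ) (σ₁ : Measure (Fin n → ℝ)) (σ₂ : Measure (Fin m → ℝ)) :
    Set (MvPolynomial (Fin n ⊕ Fin m) ℝ) :=
  {f | f ∈ Biform n m (2 * k₁) (2 * k₂) ∧ bavg σ₁ σ₂ f = 0}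

/-- The translated section `K̃ = {f ∈ 𝓜 : f + q ∈ K}` of a cone `K`. -/
def tilde (n m k₁ k₂ : ℕ) (σ₁ : Measure (Fin n → ℝ)) (σ₂ : Measure (Fin m → ℝ))
    (K : Set (MvPolynomial (Fin n ⊕ Fin m) ℝ)) : Set (MvPolynomial (Fin n ⊕ Fin m) ℝ) :=
  {f | f ∈ MSet n m k₁ k₂ σ₁ σ₂ ∧ f + qpoly n m k₁ k₂ ∈ K}

/-- The unit ball `B_𝓜` of `𝓜` in the `L²(σ)` norm. -/
def bball (n m k₁ k₂ : ℕ) (σ₁ : Measure (Fin n → ℝ)) (σ₂ : Measure (Fin m → ℝ)) :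
    Set (MvPolynomial (Fin n ⊕ Fin m) ℝ) :=
  {f | f ∈ MSet n m k₁ k₂ σ₁ σ₂ ∧ bip σ₁ σ₂ f f ≤ 1}

/-- `ψ : ℝ^D → Mset` is a unitary isomorphism: an injective linear map with range `Mset`
carrying the standard inner product of `ℝ^D` to the `L²(σ)` inner product.  Volumes of
Borel subsets `E` of `Mset` are computed as the Lebesgue measure of `ψ ⁻¹' E`
(by Lemma 1.1 of the paper this does not depend on the choice of `ψ`). -/
structure IsUnitaryParam (n m D : ℕ) (σ₁ : Measure (Fin n → ℝ)) (σ₂ : Measure (Fin m → ℝ))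
    (Mset : Set (MvPolynomial (Fin n ⊕ Fin m) ℝ))
    (ψ : (Fin D → ℝ) →ₗ[ℝ] MvPolynomial (Fin n ⊕ Fin m) ℝ) : Prop where
  inj : Function.Injective ψ
  range : Set.range ψ = Mset
  ip : ∀ a b : Fin D → ℝ, bip σ₁ σ₂ (ψ a) (ψ b) = ∑ i, a i * b i

/-- The apolar inner product `⟨r, s⟩_d = D_r(s)` on biforms, where `D_r` is the
differential operator obtained from `r` by replacing each variable by the corresponding
partial derivative; its value on a pair of forms of the same bidegree is
`∑_α r_α · s_α · α!`. -/
def apolar {n m : ℕ} (r s : MvPolynomial (Fin n ⊕ Fin m) ℝ) : ℝ :=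
  ∑ α ∈ r.support, coeff α r * coeff α s * α.prod fun _ k => (k.factorial : ℝ)

end BiformPaper

set_option linter.unusedSectionVars false

namespace BiformVolume

section Forms

variable {ι κ : Type} [Fintype ι] [DecidableEq ι] [Fintype κ] [DecidableEq κ]

/-- The monomial `u i * u j` attached to the unordered pair `s(i, j)`. -/
def mon (u : ι → ℝ) (p : Sym2 ι) : ℝ := (p.map u).mul

@[simp] lemma mon_mk (u : ι → ℝ) (i j : ι) : mon u s(i, j) = u i * u j := rfl

/-- The number of ordered pairs representing an unordered pair. -/
def mult (p : Sym2 ι) : ℝ := if p.IsDiag then 1 else 2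

lemma mult_pos (p : Sym2 ι) : 0 < mult p := by unfold mult; split_ifs <;> norm_num

@[simp] lemma mult_diag (i : ι) : mult s(i, i) = 1 := by simp [mult]

lemma sum_sym2 (g : Sym2 ι → ℝ) : ∑ i, ∑ j, g s(i, j) = ∑ p, mult p * g p := by
  classical
  rw [← Fintype.sum_prod_type' (f := fun i j => g s(i, j)),
    ← Finset.sum_fiberwise (s := Finset.univ) (g := fun x : ι × ι => s(x.1, x.2))]
  refine Finset.sum_congr rfl fun p _ => ?_
  induction p with
  | _ i j =>
    rw [Finset.sum_congr rfl (g := fun _ => g s(i, j))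
      (fun x hx => by rw [(Finset.mem_filter.1 hx).2]), Finset.sum_const, nsmul_eq_mul]
    congr 1
    by_cases h : i = j
    · subst h
      have : (Finset.univ.filter fun x : ι × ι => s(x.1, x.2) = s(i, i)) = {(i, i)} := by
        ext ⟨a, b⟩; simp
      rw [this]; simp
    · have : (Finset.univ.filter fun x : ι × ι => s(x.1, x.2) = s(i, j)) = {(i, j), (j, i)} := by
        ext ⟨a, b⟩; simp
      rw [this, Finset.card_pair (by simp [h])]; simp [mult, h]

lemma sum_sym2_le {g : Sym2 ι → ℝ} (hg : ∀ p, 0 ≤ g p) : ∑ p, g p ≤ ∑ i, ∑ j, g s(i, j) := by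
  rw [sum_sym2]
  refine Finset.sum_le_sum fun p _ => le_mul_of_one_le_left (hg p) ?_
  unfold mult; split_ifs <;> norm_num

lemma sum_mon_sq_le (u : ι → ℝ) : ∑ p, mon u p ^ 2 ≤ (∑ i, u i ^ 2) ^ 2 := by
  refine (sum_sym2_le fun p => sq_nonneg _).trans_eq ?_
  simp [sq (∑ i, u i ^ 2), Finset.sum_mul_sum, mul_pow]

/-- The quadratic form with monomial coefficients `a`. -/
def qf (a : Sym2 ι → ℝ) (u : ι → ℝ) : ℝ := ∑ p, a p * mon u p

/-- The trace of a quadratic form. -/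
def tr (a : Sym2 ι → ℝ) : ℝ := ∑ i, a s(i, i)

/-- The cone of positive semidefinite quadratic forms. -/
def psd (ι : Type) [Fintype ι] : Set (Sym2 ι → ℝ) := {a | ∀ u, 0 ≤ qf a u}

lemma qf_add (a b : Sym2 ι → ℝ) (u : ι → ℝ) : qf (a + b) u = qf a u + qf b u := by
  simp [qf, add_mul, Finset.sum_add_distrib]

lemma qf_smul (t : ℝ) (a : Sym2 ι → ℝ) (u : ι → ℝ) : qf (t • a) u = t * qf a u := by
  simp [qf, Finset.mul_sum, mul_assoc]

lemma qf_sub (a b : Sym2 ι → ℝ) (u : ι → ℝ) : qf (a - b) u = qf a u - qf b u := by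
  simp [qf, sub_mul, Finset.sum_sub_distrib]

lemma tr_add (a b : Sym2 ι → ℝ) : tr (a + b) = tr a + tr b := by
  simp [tr, Finset.sum_add_distrib]

lemma tr_smul (t : ℝ) (a : Sym2 ι → ℝ) : tr (t • a) = t * tr a := by
  simp [tr, Finset.mul_sum]

lemma mon_single (i : ι) (p : Sym2 ι) :
    mon (Pi.single i (1 : ℝ)) p = if p = s(i, i) then 1 else 0 := by
  induction p with
  | _ j k => by_cases hj : j = i <;> by_cases hk : k = i <;> simp [hj, hk]

lemma qf_single (a : Sym2 ι → ℝ) (i : ι) : qf a (Pi.single i 1) = a s(i, i) := by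
  simp [qf, mon_single]

lemma tr_eq_sum_qf (a : Sym2 ι → ℝ) : tr a = ∑ i, qf a (Pi.single i 1) := by
  simp [tr, qf_single]

lemma tr_nonneg {a : Sym2 ι → ℝ} (ha : a ∈ psd ι) : 0 ≤ tr a := by
  rw [tr_eq_sum_qf]; exact Finset.sum_nonneg fun i _ => ha _

/-- The coefficients of the square of the linear form `w`. -/
def sqc (w : ι → ℝ) (p : Sym2 ι) : ℝ := mult p * mon w p

lemma qf_sqc (w u : ι → ℝ) : qf (sqc w) u = (∑ i, w i * u i) ^ 2 := by
  simp only [qf, sqc, mul_assoc]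
  rw [← sum_sym2 (fun p => mon w p * mon u p), sq, Finset.sum_mul_sum]
  simp only [mon_mk]
  exact Finset.sum_congr rfl fun i _ => Finset.sum_congr rfl fun j _ => by ring

lemma tr_sqc (w : ι → ℝ) : tr (sqc w) = ∑ i, w i ^ 2 := by simp [tr, sqc, sq]

lemma mon_parallelogram (u v : ι → ℝ) (p : Sym2 ι) :
    mon (u + v) p + mon (u - v) p = 2 * mon u p + 2 * mon v p := by
  induction p with
  | _ j k => simp; ring

lemma mon_smul (t : ℝ) (u : ι → ℝ) (p : Sym2 ι) : mon (t • u) p = t ^ 2 * mon u p := by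
  induction p with
  | _ j k => simp; ring

lemma continuous_mon (p : Sym2 ι) : Continuous fun u : ι → ℝ => mon u p := by
  induction p with
  | _ j k => simp only [mon_mk]; fun_prop

lemma continuous_qf (u : ι → ℝ) : Continuous fun a : Sym2 ι → ℝ => qf a u := by
  unfold qf; fun_prop

lemma continuous_tr : Continuous (tr : (Sym2 ι → ℝ) → ℝ) := by
  unfold tr; fun_prop

lemma isClosed_psd : IsClosed (psd ι) := by
  simp only [psd, Set.ofPred_forall]
  exact isClosed_iInter fun u => isClosed_le continuous_const (continuous_qf u)

lemma add_mem_psd {a b : Sym2 ι → ℝ} (ha : a ∈ psd ι) (hb : b ∈ psd ι) : a + b ∈ psd ι :=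
  fun u => by rw [qf_add]; exact add_nonneg (ha u) (hb u)

lemma smul_mem_psd {t : ℝ} (ht : 0 ≤ t) {a : Sym2 ι → ℝ} (ha : a ∈ psd ι) : t • a ∈ psd ι :=
  fun u => by rw [qf_smul]; exact mul_nonneg ht (ha u)

end Forms

section Lintegral

variable {S T : Type} [Fintype S] [Fintype T]

lemma lintegral_reindex (e : S ≃ T) (f : (T → ℝ) → ENNReal) :
    ∫⁻ a, f a = ∫⁻ b : S → ℝ, f (b ∘ e.symm) := by
  rw [← (volume_measurePreserving_piCongrLeft (fun _ => ℝ) e).lintegral_comp_emb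
    (MeasurableEquiv.measurableEmbedding _)]
  refine lintegral_congr fun b => congrArg f (funext fun t => ?_)
  rw [MeasurableEquiv.coe_piCongrLeft]
  obtain ⟨s, rfl⟩ := e.surjective t
  simp [Equiv.piCongrLeft_apply_apply]

lemma lintegral_sumElim (f : (S ⊕ T → ℝ) → ENNReal) :
    ∫⁻ a, f a = ∫⁻ p : (S → ℝ) × (T → ℝ), f (Sum.elim p.1 p.2) := by
  rw [← (volume_measurePreserving_sumPiEquivProdPi_symm (fun _ : S ⊕ T => ℝ)).lintegral_comp_emb
    (MeasurableEquiv.measurableEmbedding _)]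
  refine lintegral_congr fun b => congrArg f (funext fun t => ?_)
  rcases t with t | t <;> rfl

lemma lintegral_unit (f : (Unit → ℝ) → ENNReal) :
    ∫⁻ a, f a = ∫⁻ t : ℝ, f (fun _ => t) := by
  rw [← ((volume_preserving_funUnique Unit ℝ).symm _).lintegral_comp_emb
    (MeasurableEquiv.measurableEmbedding _)]
  rfl

lemma lintegral_curry (f : (S × T → ℝ) → ENNReal) :
    ∫⁻ a, f a = ∫⁻ b : S → T → ℝ, f (fun p => b p.1 p.2) := by
  have hm : Measurable (fun (b : S → T → ℝ) (p : S × T) => b p.1 p.2) := by fun_prop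
  let e : (S → T → ℝ) ≃ᵐ (S × T → ℝ) :=
    { toFun := fun b p => b p.1 p.2
      invFun := fun a s t => a (s, t)
      left_inv := fun _ => rfl
      right_inv := fun _ => rfl
      measurable_toFun := hm
      measurable_invFun := by
        refine measurable_pi_lambda _ fun s => measurable_pi_lambda _ fun t => ?_
        exact measurable_pi_apply _ }
  have h : MeasurePreserving e volume volume := by
    refine ⟨e.measurable, (Measure.pi_eq fun s _ => ?_).symm⟩
    have : e ⁻¹' Set.univ.pi s = Set.univ.pi fun a => Set.univ.pi fun b => s (a, b) := by
      ext x; simp [e, Set.mem_pi]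
    rw [e.map_apply, this, volume_pi_pi]
    simp_rw [volume_pi_pi]
    rw [Fintype.prod_prod_type]
  rw [← h.lintegral_comp_emb e.measurableEmbedding]
  rfl

lemma lintegral_pi_prod_fin {E : Type} [MeasureSpace E] [SigmaFinite (volume : Measure E)]
    (n : ℕ) (f : Fin n → E → ENNReal) (hf : ∀ i, Measurable (f i)) :
    ∫⁻ x : Fin n → E, ∏ i, f i (x i) = ∏ i, ∫⁻ x, f i x := by
  induction n with
  | zero => simp [volume_pi]
  | succ n ih =>
    rw [← ((volume_preserving_piFinSuccAbove (fun _ : Fin (n + 1) => E) 0).symm _).lintegral_comp_emb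
      (MeasurableEquiv.measurableEmbedding _), Fin.prod_univ_succ, ← ih _ fun i => hf _]
    have hm : Measurable fun y : Fin n → E => ∏ i, f i.succ (y i) :=
      Finset.measurable_prod _ fun i _ => (hf _).comp (measurable_pi_apply i)
    refine Eq.trans (lintegral_congr fun p => ?_)
      (lintegral_prod_mul (μ := volume) (ν := volume) (hf 0).aemeasurable hm.aemeasurable)
    rw [Fin.prod_univ_succ]
    rfl

lemma lintegral_pi_prod {E : Type} [MeasureSpace E] [SigmaFinite (volume : Measure E)]
    (f : S → E → ENNReal) (hf : ∀ i, Measurable (f i)) :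
    ∫⁻ x : S → E, ∏ i, f i (x i) = ∏ i, ∫⁻ x, f i x := by
  let e := (Fintype.equivFin S).symm
  rw [← (volume_measurePreserving_piCongrLeft (fun _ => E) e).lintegral_comp_emb
    (MeasurableEquiv.measurableEmbedding _)]
  simp_rw [← e.prod_comp, MeasurableEquiv.coe_piCongrLeft, Equiv.piCongrLeft_apply_apply]
  exact lintegral_pi_prod_fin _ _ fun i => hf _

end Lintegral

/-- The integral of `exp (-ℓ)` over the set `K`. -/
def expInt {S : Type} [Fintype S] (K : Set (S → ℝ)) (ℓ : (S → ℝ) → ℝ) : ENNReal :=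
  ∫⁻ a, K.indicator (fun a => ENNReal.ofReal (Real.exp (-ℓ a))) a

section Psd

/-- The equivalence of unordered pairs induced by an equivalence. -/
def sym2Congr {α β : Type} (e : α ≃ β) : Sym2 α ≃ Sym2 β where
  toFun := Sym2.map e
  invFun := Sym2.map e.symm
  left_inv p := by simp [Sym2.map_map]
  right_inv p := by simp [Sym2.map_map]

@[simp] lemma sym2Congr_mk {α β : Type} (e : α ≃ β) (i j : α) :
    sym2Congr e s(i, j) = s(e i, e j) := rfl

@[simp] lemma sym2Congr_symm_mk {α β : Type} (e : α ≃ β) (i j : β) :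
    (sym2Congr e).symm s(i, j) = s(e.symm i, e.symm j) := rfl

lemma expInt_psd_congr {α β : Type} [Fintype α] [Fintype β] [DecidableEq α] [DecidableEq β]
    (e : α ≃ β) :
    expInt (psd α) tr = expInt (psd β) tr := by
  have hq (b : Sym2 α → ℝ) (u : α → ℝ) : qf (b ∘ (sym2Congr e).symm) (u ∘ e.symm) = qf b u := by
    unfold qf
    rw [← (sym2Congr e).sum_comp]
    refine Finset.sum_congr rfl fun p _ => ?_
    induction p with
    | _ i j => simp
  unfold expInt
  rw [lintegral_reindex (sym2Congr e)]
  refine lintegral_congr fun b => ?_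
  have h1 : b ∈ psd α ↔ b ∘ (sym2Congr e).symm ∈ psd β := by
    refine ⟨fun h u => ?_, fun h u => hq b u ▸ h _⟩
    have := hq b (u ∘ e)
    rw [show (u ∘ e) ∘ e.symm = u by ext; simp] at this
    rw [this]; exact h _
  have h2 : tr (b ∘ (sym2Congr e).symm) = tr b := by
    unfold tr; rw [← e.sum_comp]; simp
  by_cases h : b ∈ psd α
  · rw [Set.indicator_of_mem h, Set.indicator_of_mem (h1.1 h), h2]
  · rw [Set.indicator_of_notMem h, Set.indicator_of_notMem (fun h' => h (h1.2 h'))]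

/-- Splitting off the unordered pairs which involve `none`. -/
def sym2OptionEquiv (α : Type) : Unit ⊕ (α ⊕ Sym2 α) ≃ Sym2 (Option α) :=
  Equiv.ofBijective
    (Sum.elim (fun _ => s(none, none)) (Sum.elim (fun i => s(none, some i)) (Sym2.map some))) <| by
    constructor
    · rintro (x | x | x) (y | y | y) h
      · rfl
      · simp at h
      · induction y with | _ i j => simp at h
      · simp at h
      · simpa using h
      · induction y with | _ i j => simp at h
      · induction x with | _ i j => simp at h
      · induction x with | _ i j => simp at h
      · exact congrArg (Sum.inr ∘ Sum.inr) (Sym2.map.injective (Option.some_injective α) h)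
    · intro p
      induction p with
      | _ i j =>
        rcases i with _ | i <;> rcases j with _ | j
        · exact ⟨Sum.inl (), rfl⟩
        · exact ⟨Sum.inr (Sum.inl j), rfl⟩
        · exact ⟨Sum.inr (Sum.inl i), Sym2.eq_swap⟩
        · exact ⟨Sum.inr (Sum.inr s(i, j)), rfl⟩

@[simp] lemma sym2OptionEquiv_inl (α : Type) (x : Unit) :
    sym2OptionEquiv α (Sum.inl x) = s(none, none) := rfl

@[simp] lemma sym2OptionEquiv_inr_inl (α : Type) (i : α) :
    sym2OptionEquiv α (Sum.inr (Sum.inl i)) = s(none, some i) := rfl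

@[simp] lemma sym2OptionEquiv_inr_inr (α : Type) (p : Sym2 α) :
    sym2OptionEquiv α (Sum.inr (Sum.inr p)) = p.map some := rfl

variable {α : Type} [Fintype α] [DecidableEq α]

/-- The quadratic form in the variables `Option α` with the given blocks of coefficients. -/
def optForm (t : ℝ) (b : α → ℝ) (a : Sym2 α → ℝ) : Sym2 (Option α) → ℝ :=
  Sum.elim (fun _ : Unit => t) (Sum.elim b a) ∘ (sym2OptionEquiv α).symm

lemma qf_optForm (t : ℝ) (b : α → ℝ) (a : Sym2 α → ℝ) (s : ℝ) (u : α → ℝ) :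
    qf (optForm t b a) (fun o => o.elim s u) = t * s ^ 2 + s * ∑ i, b i * u i + qf a u := by
  unfold qf optForm
  rw [← (sym2OptionEquiv α).sum_comp]
  simp only [Function.comp_apply, Equiv.symm_apply_apply, Fintype.sum_sum_type, Sum.elim_inl,
    Sum.elim_inr, Finset.univ_unique, Finset.sum_singleton]
  rw [Finset.mul_sum, add_assoc]
  congr 1
  · simp [sq]
  · congr 1
    · refine Finset.sum_congr rfl fun i _ => ?_
      simp; ring
    · refine Finset.sum_congr rfl fun p _ => ?_
      induction p with
      | _ i j => simp

lemma tr_optForm (t : ℝ) (b : α → ℝ) (a : Sym2 α → ℝ) :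
    tr (optForm t b a) = t + tr a := by
  simp only [tr_eq_sum_qf, Fintype.sum_option]
  congr 1
  · have := qf_optForm t b a 1 0
    simp only [one_pow, mul_one, Pi.zero_apply, mul_zero, Finset.sum_const_zero, add_zero] at this
    convert this using 2
    · ext o; rcases o with _ | o <;> simp
    · simp only [qf]
      rw [Finset.sum_eq_zero, add_zero]
      intro p _
      induction p with | _ i j => simp
  · refine Finset.sum_congr rfl fun i _ => ?_
    have := qf_optForm t b a 0 (Pi.single i 1)
    simp only [zero_mul, ne_eq, OfNat.ofNat_ne_zero, not_false_eq_true, zero_pow, mul_zero,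
      zero_add] at this
    rw [← this]
    congr 1
    ext o; rcases o with _ | o <;> simp [Pi.single_apply]

lemma measurable_indicator_psd (β : Type) [Fintype β] [DecidableEq β] :
    Measurable ((psd β).indicator fun a => ENNReal.ofReal (Real.exp (-tr a))) :=
  (ENNReal.measurable_ofReal.comp (Real.measurable_exp.comp
    continuous_tr.measurable.neg)).indicator isClosed_psd.measurableSet

lemma measurable_optForm :
    Measurable fun p : ℝ × (α → ℝ) × (Sym2 α → ℝ) => optForm p.1 p.2.1 p.2.2 := by
  refine measurable_pi_lambda _ fun p => ?_
  unfold optForm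
  rcases h : (sym2OptionEquiv α).symm p with x | x | x <;>
    simp only [Function.comp_apply, h, Sum.elim_inl, Sum.elim_inr] <;> fun_prop

lemma expInt_option :
    expInt (psd (Option α)) tr =
      ∫⁻ t : ℝ, ∫⁻ b : α → ℝ, ∫⁻ a : Sym2 α → ℝ, (psd (Option α)).indicator
        (fun a => ENNReal.ofReal (Real.exp (-tr a))) (optForm t b a) := by
  have hm := measurable_indicator_psd (Option α)
  unfold expInt
  rw [lintegral_reindex (sym2OptionEquiv α), lintegral_sumElim]
  rw [Measure.volume_eq_prod, lintegral_prod, lintegral_unit]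
  · refine lintegral_congr fun t => ?_
    rw [lintegral_sumElim, Measure.volume_eq_prod, lintegral_prod]
    · rfl
    · exact (hm.comp (measurable_optForm.comp
        ((measurable_const (a := t)).prodMk measurable_id))).aemeasurable
  · have h2 : Measurable fun p : (Unit → ℝ) × (α ⊕ Sym2 α → ℝ) =>
        (p.1 (), (fun i => p.2 (Sum.inl i)), (fun i => p.2 (Sum.inr i))) := by fun_prop
    refine Measurable.aemeasurable ?_
    convert hm.comp (measurable_optForm.comp h2) using 2 with p
    refine congrArg _ (funext fun r => ?_)
    simp only [Function.comp_apply, optForm]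
    rcases (sym2OptionEquiv α).symm r with x | x | x <;> rfl

end Psd

section PsdBound

variable {α : Type} [Fintype α] [DecidableEq α]

lemma pos_of_optForm_mem {t : ℝ} {b : α → ℝ} {a : Sym2 α → ℝ}
    (h : optForm t b a ∈ psd (Option α)) : 0 ≤ t := by
  have := h (fun o => o.elim 1 0)
  rw [show (fun o : Option α => o.elim 1 (0 : α → ℝ)) = fun o => o.elim 1 (fun i => (0 : α → ℝ) i)
    from rfl, qf_optForm] at this
  have h0 : qf a (fun i => (0 : α → ℝ) i) = 0 := by
    simp only [qf]
    refine Finset.sum_eq_zero fun p _ => ?_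
    induction p with | _ i j => simp
  rw [h0] at this
  simpa using this

lemma sub_sqc_mem_psd {t : ℝ} (ht : 0 < t) {b : α → ℝ} {a : Sym2 α → ℝ}
    (h : optForm t b a ∈ psd (Option α)) :
    a - sqc ((2 * √t)⁻¹ • b) ∈ psd α := by
  intro u
  have := h (fun o => o.elim (-(∑ i, b i * u i) / (2 * t)) u)
  rw [qf_optForm] at this
  rw [qf_sub, qf_sqc]
  have e : (∑ i, ((2 * √t)⁻¹ • b) i * u i) = (2 * √t)⁻¹ * ∑ i, b i * u i := by
    simp [Finset.mul_sum, mul_assoc]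
  rw [e, mul_pow, inv_pow, mul_pow, Real.sq_sqrt ht.le]
  convert this using 1
  field_simp
  ring

lemma lintegral_exp_sq {c : ℝ} (hc : 0 < c) :
    ∫⁻ b : α → ℝ, ENNReal.ofReal (Real.exp (-(c * ∑ i, b i ^ 2))) =
      ENNReal.ofReal (√(Real.pi / c) ^ Fintype.card α) := by
  have : ∀ b : α → ℝ, ENNReal.ofReal (Real.exp (-(c * ∑ i, b i ^ 2))) =
      ∏ i, ENNReal.ofReal (Real.exp (-c * b i ^ 2)) := fun b => by
    rw [← ENNReal.ofReal_prod_of_nonneg fun i _ => (Real.exp_pos _).le, ← Real.exp_sum,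
      ← Finset.mul_sum, neg_mul]
  simp_rw [this]
  rw [lintegral_pi_prod (fun _ t => ENNReal.ofReal (Real.exp (-c * t ^ 2))) fun i => by fun_prop]
  rw [← ofReal_integral_eq_lintegral_ofReal (integrable_exp_neg_mul_sq hc)
      (ae_of_all _ fun x => (Real.exp_pos _).le), integral_gaussian]
  simp [ENNReal.ofReal_pow]

lemma lintegral_psd_slice_le {t : ℝ} (ht : 0 < t) (b : α → ℝ) :
    ∫⁻ a : Sym2 α → ℝ, (psd (Option α)).indicator
        (fun a => ENNReal.ofReal (Real.exp (-tr a))) (optForm t b a) ≤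
      ENNReal.ofReal (Real.exp (-t)) *
        (ENNReal.ofReal (Real.exp (-((4 * t)⁻¹ * ∑ i, b i ^ 2))) * expInt (psd α) tr) := by
  set c := sqc ((2 * √t)⁻¹ • b)
  have hc : tr c = (4 * t)⁻¹ * ∑ i, b i ^ 2 := by
    rw [tr_sqc]
    simp only [Pi.smul_apply, smul_eq_mul, mul_pow, ← Finset.mul_sum, inv_pow, Real.sq_sqrt ht.le]
    norm_num
  rw [expInt, ← lintegral_sub_right_eq_self (μ := volume)
      ((psd α).indicator fun a => ENNReal.ofReal (Real.exp (-tr a))) c]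
  have hm : Measurable fun a : Sym2 α → ℝ =>
      (psd α).indicator (fun a => ENNReal.ofReal (Real.exp (-tr a))) (a - c) :=
    (measurable_indicator_psd α).comp (measurable_id.sub_const c)
  rw [← lintegral_const_mul _ hm, ← lintegral_const_mul _ (hm.const_mul _)]
  refine lintegral_mono fun a => ?_
  by_cases h : optForm t b a ∈ psd (Option α)
  · rw [Set.indicator_of_mem h, Set.indicator_of_mem (sub_sqc_mem_psd ht h),
      ← ENNReal.ofReal_mul (Real.exp_pos _).le, ← ENNReal.ofReal_mul (Real.exp_pos _).le,
      ← Real.exp_add, ← Real.exp_add, tr_optForm, ← hc]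
    refine ENNReal.ofReal_le_ofReal (Real.exp_le_exp.2 ?_)
    have := tr_add (a - c) c
    rw [sub_add_cancel] at this
    linarith
  · rw [Set.indicator_of_notMem h]; exact zero_le

/-- The growth rate in the bound for the exponential integral of the cone of positive
semidefinite forms. -/
def rate (N : ℝ) : ℝ := √(4 * Real.pi * N / Real.exp 1)

lemma rate_nonneg (N : ℝ) : 0 ≤ rate N := Real.sqrt_nonneg _

lemma sqrt_pow_mul_exp_le {N : ℝ} (hN : 0 < N) {k : ℕ} (hk : (k : ℝ) ≤ N) {t : ℝ} (ht : 0 < t) :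
    Real.exp (-t) * √(Real.pi / (4 * t)⁻¹) ^ k ≤ rate N ^ k * Real.exp (-(1 / 2) * t) := by
  have h1 : Real.exp (-t) = Real.exp (-(1 / 2) * t) * Real.exp (-(1 / 2) * t) := by
    rw [← Real.exp_add]; ring_nf
  have h2 : Real.exp (-(1 / 2) * t) ≤ Real.exp (-(t / (2 * N))) ^ k := by
    rw [← Real.exp_nat_mul]
    refine Real.exp_le_exp.2 ?_
    have : (k : ℝ) * (t / (2 * N)) ≤ N * (t / (2 * N)) :=
      mul_le_mul_of_nonneg_right hk (by positivity)
    have h3 : N * (t / (2 * N)) = t / 2 := by field_simp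
    linarith
  have h3 : Real.exp (-(t / (2 * N))) * √(Real.pi / (4 * t)⁻¹) ≤ rate N := by
    refine Real.le_sqrt_of_sq_le ?_
    rw [mul_pow, Real.sq_sqrt (by positivity), ← Real.exp_nat_mul]
    have h5 : t / N ≤ Real.exp (t / N - 1) := by
      have := Real.add_one_le_exp (t / N - 1); linarith
    have h6 : Real.exp (t / N - 1) = Real.exp (t / N) / Real.exp 1 := Real.exp_sub _ _
    have h7 : Real.exp (((2 : ℕ) : ℝ) * -(t / (2 * N))) = (Real.exp (t / N))⁻¹ := by
      rw [← Real.exp_neg]; congr 1; push_cast; field_simp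
    rw [h7]
    rw [h6] at h5
    have h8 : t ≤ N * (Real.exp (t / N) / Real.exp 1) := by
      rw [div_le_iff₀ hN] at h5; linarith
    calc (Real.exp (t / N))⁻¹ * (Real.pi / (4 * t)⁻¹)
        = 4 * Real.pi * (Real.exp (t / N))⁻¹ * t := by field_simp
      _ ≤ 4 * Real.pi * (Real.exp (t / N))⁻¹ * (N * (Real.exp (t / N) / Real.exp 1)) := by
          gcongr
      _ = _ := by field_simp
  calc Real.exp (-t) * √(Real.pi / (4 * t)⁻¹) ^ k
      ≤ Real.exp (-(1 / 2) * t) * Real.exp (-(t / (2 * N))) ^ k * √(Real.pi / (4 * t)⁻¹) ^ k := by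
        rw [h1]; gcongr
    _ = (Real.exp (-(t / (2 * N))) * √(Real.pi / (4 * t)⁻¹)) ^ k * Real.exp (-(1 / 2) * t) := by
        rw [mul_pow]; ring
    _ ≤ _ := by gcongr

lemma expInt_option_le {N : ℝ} (hN : 0 < N) (hk : (Fintype.card α : ℝ) ≤ N) :
    expInt (psd (Option α)) tr ≤
      ENNReal.ofReal (2 * rate N ^ Fintype.card α) * expInt (psd α) tr := by
  set J := expInt (psd α) tr
  have key : ∀ t : ℝ, t ≠ 0 → ∫⁻ b : α → ℝ, ∫⁻ a : Sym2 α → ℝ, (psd (Option α)).indicator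
        (fun a => ENNReal.ofReal (Real.exp (-tr a))) (optForm t b a) ≤
      (Set.Ioi 0).indicator (fun t => ENNReal.ofReal
        (rate N ^ Fintype.card α * Real.exp (-(1 / 2) * t)) * J) t := by
    intro t ht0
    rcases lt_or_gt_of_ne ht0 with ht | ht
    · refine le_of_eq_of_le ?_ zero_le
      rw [lintegral_eq_zero_of_ae_eq_zero]
      refine ae_of_all _ fun b => lintegral_eq_zero_of_ae_eq_zero (ae_of_all _ fun a => ?_)
      exact Set.indicator_of_notMem (fun h => absurd (pos_of_optForm_mem h) (not_le.2 ht)) _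
    · rw [Set.indicator_of_mem (Set.mem_Ioi.2 ht)]
      refine (lintegral_mono fun b => lintegral_psd_slice_le ht b).trans ?_
      rw [lintegral_const_mul _ (by fun_prop), lintegral_mul_const _ (by fun_prop),
        lintegral_exp_sq (by positivity), ← mul_assoc, ← ENNReal.ofReal_mul (Real.exp_pos _).le]
      exact mul_le_mul' (ENNReal.ofReal_le_ofReal (sqrt_pow_mul_exp_le hN hk ht)) le_rfl
  rw [expInt_option]
  refine (lintegral_mono_ae ((Measure.ae_ne volume 0).mono key)).trans ?_
  rw [lintegral_indicator measurableSet_Ioi, lintegral_mul_const _ (by fun_prop)]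
  gcongr
  rw [← ofReal_integral_eq_lintegral_ofReal]
  · rw [integral_const_mul, integral_exp_mul_Ioi (by norm_num)]
    apply le_of_eq; congr 1; simp; ring
  · exact (integrableOn_exp_mul_Ioi (by norm_num) 0).const_mul _
  · exact ae_of_all _ fun t => mul_nonneg (pow_nonneg (rate_nonneg _) _) (Real.exp_pos _).le

lemma expInt_psd_le {N : ℝ} (hN : 0 < N) (β : Type) [Fintype β] [DecidableEq β]
    (hk : (Fintype.card β : ℝ) ≤ N) :
    expInt (psd β) tr ≤ ENNReal.ofReal
      (2 ^ Fintype.card β * rate N ^ (Fintype.card β).choose 2) := by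
  classical
  have main : ∀ k : ℕ, (k : ℝ) ≤ N → expInt (psd (Fin k)) tr ≤ ENNReal.ofReal
      (2 ^ k * rate N ^ k.choose 2) := by
    intro k
    induction k with
    | zero =>
      intro _
      simp only [expInt]
      rw [volume_pi, Measure.pi_of_empty, lintegral_dirac]
      refine (Set.indicator_le_self _ _ _).trans ?_
      simp [tr]
    | succ k ih =>
      intro hk
      have hk' : (k : ℝ) ≤ N := by push_cast at hk; linarith
      rw [expInt_psd_congr (finSuccEquiv k)]
      refine (expInt_option_le hN (by simpa using hk')).trans ?_
      refine (mul_le_mul_right (ih hk') _).trans ?_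
      rw [← ENNReal.ofReal_mul (mul_nonneg zero_le_two (pow_nonneg (rate_nonneg _) _))]
      apply le_of_eq; congr 1
      rw [Nat.choose_succ_succ' k 1, Nat.choose_one_right, Fintype.card_fin, pow_add, pow_succ]
      ring
  rw [expInt_psd_congr (Fintype.equivFin β)]
  exact main _ hk

end PsdBound

section EuclideanBall

variable {ι : Type} [Fintype ι]

/-- The squared Euclidean norm. -/
def nsq (u : ι → ℝ) : ℝ := ∑ i, u i ^ 2

lemma nsq_nonneg (u : ι → ℝ) : 0 ≤ nsq u := Finset.sum_nonneg fun _ _ => sq_nonneg _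

lemma nsq_smul (t : ℝ) (u : ι → ℝ) : nsq (t • u) = t ^ 2 * nsq u := by
  simp [nsq, mul_pow, Finset.mul_sum]

lemma nsq_neg (u : ι → ℝ) : nsq (-u) = nsq u := by simp [nsq]

lemma nsq_eq_zero {u : ι → ℝ} : nsq u = 0 ↔ u = 0 := by
  simp [nsq, Finset.sum_eq_zero_iff_of_nonneg, sq_nonneg, funext_iff]

lemma nsq_pos {u : ι → ℝ} (h : u ≠ 0) : 0 < nsq u :=
  (nsq_nonneg u).lt_of_ne' fun h' => h (nsq_eq_zero.1 h')

lemma continuous_nsq : Continuous (nsq : (ι → ℝ) → ℝ) := by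
  unfold nsq; fun_prop

/-- The Euclidean ball of radius `r` around the origin. -/
def eball (ι : Type) [Fintype ι] (r : ℝ) : Set (ι → ℝ) := {u | nsq u ≤ r ^ 2}

lemma isClosed_eball (r : ℝ) : IsClosed (eball ι r) :=
  isClosed_le continuous_nsq continuous_const

lemma measurableSet_eball (r : ℝ) : MeasurableSet (eball ι r) :=
  (isClosed_eball r).measurableSet

open scoped Pointwise in
lemma eball_eq_smul {r : ℝ} (hr : 0 < r) : eball ι r = r • eball ι 1 := by
  ext u
  rw [Set.mem_smul_set_iff_inv_smul_mem₀ hr.ne']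
  simp only [eball, Set.mem_ofPred_eq, nsq_smul, inv_pow, one_pow]
  rw [inv_mul_le_iff₀ (by positivity), mul_one]

lemma volume_eball {r : ℝ} (hr : 0 < r) :
    volume (eball ι r) = ENNReal.ofReal (r ^ Fintype.card ι) * volume (eball ι 1) := by
  rw [eball_eq_smul hr, Measure.addHaar_smul, Module.finrank_fintype_fun_eq_card,
    abs_of_nonneg (by positivity)]

lemma eball_subset : eball ι 1 ⊆ Set.Icc (fun _ => -1) (fun _ => 1) := by
  intro u hu
  have (i : ι) : |u i| ≤ 1 := by
    have h : u i ^ 2 ≤ nsq u :=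
      Finset.single_le_sum (f := fun i => u i ^ 2) (fun _ _ => sq_nonneg _) (Finset.mem_univ i)
    have hu' : nsq u ≤ 1 ^ 2 := hu
    exact abs_le_one_iff_mul_self_le_one.2 (by nlinarith)
  exact ⟨fun i => (abs_le.1 (this i)).1, fun i => (abs_le.1 (this i)).2⟩

lemma volume_eball_ne_top : volume (eball ι 1) ≠ ⊤ :=
  ((measure_mono eball_subset).trans_lt isCompact_Icc.measure_lt_top).ne

lemma volume_eball_ne_zero : volume (eball ι 1) ≠ 0 := by
  have h : IsOpen {u : ι → ℝ | nsq u < 1} := isOpen_lt continuous_nsq continuous_const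
  refine ((h.measure_pos volume ⟨0, by simp [nsq]⟩).trans_le (measure_mono fun u hu => ?_)).ne'
  have : nsq u < 1 := hu
  show nsq u ≤ 1 ^ 2
  linarith

lemma isCompact_nsq_eq_one : IsCompact {u : ι → ℝ | nsq u = 1} := by
  refine isCompact_Icc.of_isClosed_subset (isClosed_eq continuous_nsq continuous_const)
    (Set.Subset.trans (fun u hu => ?_) eball_subset)
  show nsq u ≤ 1 ^ 2
  rw [one_pow]; exact le_of_eq hu

lemma four_smul_add_mem {x v : ι → ℝ} (hx : nsq x = 1) (hv : v ∈ eball ι 1) :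
    (4 : ℝ) • x + v ∈ eball ι 5 := by
  have h1 : nsq ((4 : ℝ) • x + v) ≤ 20 * nsq x + 5 * nsq v := by
    simp only [nsq, Finset.mul_sum, ← Finset.sum_add_distrib]
    refine Finset.sum_le_sum fun i _ => ?_
    simp only [Pi.add_apply, Pi.smul_apply, smul_eq_mul]
    nlinarith [sq_nonneg (x i - v i)]
  have hv' : nsq v ≤ 1 ^ 2 := hv
  show nsq _ ≤ 5 ^ 2
  linarith

end EuclideanBall

section Gaussian

variable {S ι κ : Type} [Fintype S] [Fintype ι] [Fintype κ]

/-- A family of functions which are quadratic forms in each of the two arguments, up to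
regularity, normalized by `V`. -/
structure BiquadFamily (V : ℝ) (φ : S → (ι → ℝ) → (κ → ℝ) → ℝ) : Prop where
  cont : ∀ s, Continuous fun p : (ι → ℝ) × (κ → ℝ) => φ s p.1 p.2
  par_left : ∀ s x v y, φ s (x + v) y + φ s (x - v) y = 2 * φ s x y + 2 * φ s v y
  par_right : ∀ s x y w, φ s x (y + w) + φ s x (y - w) = 2 * φ s x y + 2 * φ s x w
  smul_left : ∀ s t x y, φ s (t • x) y = t ^ 2 * φ s x y
  smul_right : ∀ s t x y, φ s x (t • y) = t ^ 2 * φ s x y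
  bound : ∀ x y, ∑ s, φ s x y ^ 2 ≤ V * (nsq x ^ 2 * nsq y ^ 2)

/-- The linear combination of the family with coefficients `c`. -/
def comb (φ : S → (ι → ℝ) → (κ → ℝ) → ℝ) (c : S → ℝ) (x : ι → ℝ) (y : κ → ℝ) : ℝ :=
  ∑ s, c s * φ s x y

/-- The coefficients for which the linear combination is bounded by the squared norms. -/
def unitBody (φ : S → (ι → ℝ) → (κ → ℝ) → ℝ) : Set (S → ℝ) :=
  {c | ∀ x y, |comb φ c x y| ≤ nsq x * nsq y}

variable {V : ℝ} {φ : S → (ι → ℝ) → (κ → ℝ) → ℝ}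

lemma comb_neg (c : S → ℝ) (x : ι → ℝ) (y : κ → ℝ) : comb φ (-c) x y = -comb φ c x y := by
  simp [comb]

lemma isClosed_unitBody : IsClosed (unitBody φ) := by
  simp only [unitBody, Set.ofPred_forall]
  refine isClosed_iInter fun x => isClosed_iInter fun y => isClosed_le ?_ continuous_const
  unfold comb; fun_prop

namespace BiquadFamily

lemma comb_par_left (hφ : BiquadFamily V φ) (c : S → ℝ) (x v : ι → ℝ) (y : κ → ℝ) :
    comb φ c (x + v) y + comb φ c (x - v) y = 2 * comb φ c x y + 2 * comb φ c v y := by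
  simp only [comb, Finset.mul_sum, ← Finset.sum_add_distrib]
  exact Finset.sum_congr rfl fun s _ => by linear_combination c s * hφ.par_left s x v y

lemma comb_par_right (hφ : BiquadFamily V φ) (c : S → ℝ) (x : ι → ℝ) (y w : κ → ℝ) :
    comb φ c x (y + w) + comb φ c x (y - w) = 2 * comb φ c x y + 2 * comb φ c x w := by
  simp only [comb, Finset.mul_sum, ← Finset.sum_add_distrib]
  exact Finset.sum_congr rfl fun s _ => by linear_combination c s * hφ.par_right s x y w

lemma comb_smul (hφ : BiquadFamily V φ) (c : S → ℝ) (t r : ℝ) (x : ι → ℝ) (y : κ → ℝ) :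
    comb φ c (t • x) (r • y) = t ^ 2 * r ^ 2 * comb φ c x y := by
  simp only [comb, Finset.mul_sum]
  exact Finset.sum_congr rfl fun s _ => by rw [hφ.smul_left, hφ.smul_right]; ring

lemma comb_smul_left (hφ : BiquadFamily V φ) (c : S → ℝ) (t : ℝ) (x : ι → ℝ) (y : κ → ℝ) :
    comb φ c (t • x) y = t ^ 2 * comb φ c x y := by
  have := hφ.comb_smul c t 1 x y
  simpa using this

lemma comb_smul_right (hφ : BiquadFamily V φ) (c : S → ℝ) (r : ℝ) (x : ι → ℝ) (y : κ → ℝ) :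
    comb φ c x (r • y) = r ^ 2 * comb φ c x y := by
  have := hφ.comb_smul c 1 r x y
  simpa using this

lemma continuous_comb (hφ : BiquadFamily V φ) (c : S → ℝ) : Continuous fun p : (ι → ℝ) × (κ → ℝ) =>
    comb φ c p.1 p.2 :=
  continuous_finsetSum _ fun s _ => continuous_const.mul (hφ.cont s)

lemma exists_max (hφ : BiquadFamily V φ) {c : S → ℝ} (hc : c ∉ unitBody φ) :
    ∃ x y t, nsq x = 1 ∧ nsq y = 1 ∧ 1 < t ∧ |comb φ c x y| = t ∧
      ∀ v w, |comb φ c v w| ≤ t * (nsq v * nsq w) := by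
  simp only [unitBody, Set.mem_ofPred_eq, not_forall, not_le] at hc
  obtain ⟨x, y, h⟩ := hc
  have normalize : ∀ {v : ι → ℝ} {w : κ → ℝ}, v ≠ 0 → w ≠ 0 →
      nsq ((√(nsq v))⁻¹ • v) = 1 ∧ nsq ((√(nsq w))⁻¹ • w) = 1 ∧
      |comb φ c v w| = |comb φ c ((√(nsq v))⁻¹ • v) ((√(nsq w))⁻¹ • w)| * (nsq v * nsq w) := by
    intro v w hv hw
    have hv' := nsq_pos hv
    have hw' := nsq_pos hw
    refine ⟨?_, ?_, ?_⟩
    · rw [nsq_smul, inv_pow, Real.sq_sqrt hv'.le, inv_mul_cancel₀ hv'.ne']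
    · rw [nsq_smul, inv_pow, Real.sq_sqrt hw'.le, inv_mul_cancel₀ hw'.ne']
    · rw [hφ.comb_smul, inv_pow, Real.sq_sqrt hv'.le, inv_pow, Real.sq_sqrt hw'.le, abs_mul,
        abs_of_pos (mul_pos (inv_pos.2 hv') (inv_pos.2 hw'))]
      field_simp
  have zero : ∀ {v : ι → ℝ} {w : κ → ℝ}, v = 0 ∨ w = 0 → comb φ c v w = 0 := by
    rintro v w (rfl | rfl)
    · simpa using hφ.comb_smul_left c 0 0 w
    · simpa using hφ.comb_smul_right c 0 v 0
  have hx : x ≠ 0 := fun hx => by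
    rw [zero (Or.inl hx), hx] at h; simp [nsq] at h
  have hy : y ≠ 0 := fun hy => by
    rw [zero (Or.inr hy), hy] at h; simp [nsq] at h
  obtain ⟨h1, h2, h3⟩ := normalize hx hy
  obtain ⟨⟨a, b⟩, ⟨ha, hb⟩, hmax⟩ := (isCompact_nsq_eq_one.prod isCompact_nsq_eq_one).exists_isMaxOn
    ⟨(_, _), Set.mk_mem_prod h1 h2⟩ (hφ.continuous_comb c).abs.continuousOn
  refine ⟨a, b, _, ha, hb, ?_, rfl, fun v w => ?_⟩
  · have h4 := hmax (Set.mk_mem_prod h1 h2)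
    simp only [Set.mem_ofPred_eq] at h4
    refine lt_of_lt_of_le ?_ h4
    rw [h3] at h
    have : 0 < nsq x * nsq y := mul_pos (nsq_pos hx) (nsq_pos hy)
    by_contra hle
    nlinarith
  · by_cases h0 : v = 0 ∨ w = 0
    · rw [zero h0, abs_zero]
      exact mul_nonneg (abs_nonneg _) (mul_nonneg (nsq_nonneg _) (nsq_nonneg _))
    · push Not at h0
      obtain ⟨g1, g2, g3⟩ := normalize h0.1 h0.2
      rw [g3]
      exact mul_le_mul_of_nonneg_right (hmax (Set.mk_mem_prod g1 g2))
        (mul_nonneg (nsq_nonneg _) (nsq_nonneg _))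

/-- The average over the four sign choices is large near a maximum. -/
lemma sign_average_ge (hφ : BiquadFamily V φ) {c : S → ℝ} {x : ι → ℝ} {y : κ → ℝ} {t : ℝ} (hx : nsq x = 1)
    (hy : nsq y = 1) (ht : 1 < t) (hc : comb φ c x y = t)
    (hmax : ∀ v w, |comb φ c v w| ≤ t * (nsq v * nsq w)) {v : ι → ℝ} {w : κ → ℝ}
    (hv : v ∈ eball ι 1) (hw : w ∈ eball κ 1) :
    4 * 223 ≤ comb φ c ((4 : ℝ) • x + v) ((4 : ℝ) • y + w) +
      comb φ c ((4 : ℝ) • x - v) ((4 : ℝ) • y + w) +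
      comb φ c ((4 : ℝ) • x + v) ((4 : ℝ) • y - w) +
      comb φ c ((4 : ℝ) • x - v) ((4 : ℝ) • y - w) := by
  have e1 := hφ.comb_par_left c ((4 : ℝ) • x) v ((4 : ℝ) • y + w)
  have e2 := hφ.comb_par_left c ((4 : ℝ) • x) v ((4 : ℝ) • y - w)
  have e3 := hφ.comb_par_right c ((4 : ℝ) • x) ((4 : ℝ) • y) w
  have e4 := hφ.comb_par_right c v ((4 : ℝ) • y) w
  rw [hφ.comb_smul, hφ.comb_smul_left c 4 x w, hc] at e3
  rw [hφ.comb_smul_right] at e4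
  have hv' : nsq v ≤ 1 ^ 2 := hv
  have hw' : nsq w ≤ 1 ^ 2 := hw
  have b1 := (abs_le.1 (hmax x w)).1
  have b2 := (abs_le.1 (hmax v y)).1
  have b3 := (abs_le.1 (hmax v w)).1
  rw [hx, one_mul] at b1
  rw [hy, mul_one] at b2
  have h0 : 0 < t := by linarith
  have c1 : t * nsq w ≤ t * 1 := mul_le_mul_of_nonneg_left (by linarith) h0.le
  have c2 : t * nsq v ≤ t * 1 := mul_le_mul_of_nonneg_left (by linarith) h0.le
  have c3 : t * (nsq v * nsq w) ≤ t * 1 := mul_le_mul_of_nonneg_left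
    (by nlinarith [nsq_nonneg v, nsq_nonneg w]) h0.le
  nlinarith

end BiquadFamily

end Gaussian

section Tail

variable {S ι κ : Type} [Fintype S] [Fintype ι] [Fintype κ]
  {V : ℝ} {φ : S → (ι → ℝ) → (κ → ℝ) → ℝ}

lemma four_exp_le {a b c d m : ℝ} (h : 4 * m ≤ a + b + c + d) :
    4 * Real.exp m ≤ Real.exp a + Real.exp b + Real.exp c + Real.exp d := by
  have key (z : ℝ) : Real.exp m * (1 + (z - m)) ≤ Real.exp z := by
    have h1 : Real.exp z = Real.exp m * Real.exp (z - m) := by rw [← Real.exp_add]; ring_nf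
    rw [h1]
    exact mul_le_mul_of_nonneg_left (by linarith [Real.add_one_le_exp (z - m)])
      (Real.exp_pos m).le
  nlinarith [key a, key b, key c, key d, Real.exp_pos m]

/-- The product of the two Euclidean balls of radius `r`. -/
def biball (ι κ : Type) [Fintype ι] [Fintype κ] (r : ℝ) : Set ((ι → ℝ) × (κ → ℝ)) :=
  eball ι r ×ˢ eball κ r

lemma measurableSet_biball (r : ℝ) : MeasurableSet (biball ι κ r) :=
  (measurableSet_eball r).prod (measurableSet_eball r)

lemma volume_biball {r : ℝ} (hr : 0 < r) : volume (biball ι κ r) =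
    ENNReal.ofReal (r ^ (Fintype.card ι + Fintype.card κ)) * volume (biball ι κ 1) := by
  simp only [biball, Measure.volume_eq_prod, Measure.prod_prod]
  rw [volume_eball hr, volume_eball (ι := κ) hr, pow_add, ENNReal.ofReal_mul (by positivity)]
  ring

lemma volume_biball_ne_top : volume (biball ι κ 1) ≠ ⊤ := by
  simp only [biball, Measure.volume_eq_prod, Measure.prod_prod]
  exact ENNReal.mul_ne_top volume_eball_ne_top volume_eball_ne_top

lemma volume_biball_ne_zero : volume (biball ι κ 1) ≠ 0 := by
  simp only [biball, Measure.volume_eq_prod, Measure.prod_prod]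
  exact mul_ne_zero volume_eball_ne_zero volume_eball_ne_zero

lemma exp_integral_ge_aux (hφ : BiquadFamily V φ) {c : S → ℝ} {x : ι → ℝ} {y : κ → ℝ} {t l : ℝ}
    (hl : 0 ≤ l) (hx : nsq x = 1)
    (hy : nsq y = 1) (ht : 1 < t) (hc : comb φ c x y = t)
    (hmax : ∀ v w, |comb φ c v w| ≤ t * (nsq v * nsq w)) :
    volume (biball ι κ 1) * ENNReal.ofReal (Real.exp (223 * l)) ≤
      ∫⁻ p in biball ι κ 5, ENNReal.ofReal (Real.exp (l * comb φ c p.1 p.2)) := by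
  have hcont := hφ.continuous_comb c
  have : (volume : Measure ((ι → ℝ) × (κ → ℝ))).IsAddLeftInvariant :=
    inferInstanceAs (Measure.prod volume volume).IsAddLeftInvariant
  set G : (ι → ℝ) × (κ → ℝ) → ENNReal := fun p => (biball ι κ 1).indicator (fun p =>
    ENNReal.ofReal (Real.exp (l * comb φ c ((4 : ℝ) • x + p.1) ((4 : ℝ) • y + p.2)))) p with hG
  have hGm : Measurable G := by
    refine Measurable.indicator ?_ (measurableSet_biball 1)
    have h2 : Continuous fun p : (ι → ℝ) × (κ → ℝ) => ((4 : ℝ) • x + p.1, (4 : ℝ) • y + p.2) := by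
      fun_prop
    exact (ENNReal.continuous_ofReal.comp (Real.continuous_exp.comp
      (continuous_const.mul (hcont.comp h2)))).measurable
  have h1 : ∫⁻ p, G p ≤
      ∫⁻ p in biball ι κ 5, ENNReal.ofReal (Real.exp (l * comb φ c p.1 p.2)) := by
    rw [← lintegral_indicator (measurableSet_biball 5),
      ← lintegral_add_left_eq_self (μ := (volume : Measure ((ι → ℝ) × (κ → ℝ))))
        ((biball ι κ 5).indicator fun p => ENNReal.ofReal (Real.exp (l * comb φ c p.1 p.2)))
        ((4 : ℝ) • x, (4 : ℝ) • y)]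
    refine lintegral_mono fun p => ?_
    simp only [hG]
    by_cases hp : p ∈ biball ι κ 1
    swap
    · rw [Set.indicator_of_notMem hp]; exact zero_le
    rw [Set.indicator_of_mem hp, Set.indicator_of_mem]
    · rfl
    · exact ⟨four_smul_add_mem hx hp.1, four_smul_add_mem hy hp.2⟩
  refine le_trans ?_ h1
  have mp1 : MeasurePreserving (fun p : (ι → ℝ) × (κ → ℝ) => (-p.1, p.2)) :=
    (Measure.measurePreserving_neg (volume : Measure (ι → ℝ))).prod
      (MeasurePreserving.id (volume : Measure (κ → ℝ)))
  have mp2 : MeasurePreserving (fun p : (ι → ℝ) × (κ → ℝ) => (p.1, -p.2)) :=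
    (MeasurePreserving.id (volume : Measure (ι → ℝ))).prod
      (Measure.measurePreserving_neg (volume : Measure (κ → ℝ)))
  have i1 := mp1.lintegral_comp hGm
  have i2 := mp2.lintegral_comp hGm
  have i3 := (mp1.comp mp2).lintegral_comp hGm
  simp only [Function.comp_apply] at i3
  have hsum : 4 * ∫⁻ p, G p = ∫⁻ p, (G p + G (-p.1, p.2) + G (p.1, -p.2) + G (-p.1, -p.2)) := by
    have m1 : Measurable fun p : (ι → ℝ) × (κ → ℝ) => G (-p.1, p.2) := hGm.comp mp1.measurable
    have m2 : Measurable fun p : (ι → ℝ) × (κ → ℝ) => G (p.1, -p.2) := hGm.comp mp2.measurable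
    have m3 : Measurable fun p => G p + G (-p.1, p.2) := hGm.add m1
    have m4 : Measurable fun p => G p + G (-p.1, p.2) + G (p.1, -p.2) := m3.add m2
    rw [lintegral_add_left m4, lintegral_add_left m3,
      lintegral_add_left hGm, i1, i2, i3]
    ring
  have h4 : 4 * (volume (biball ι κ 1) * ENNReal.ofReal (Real.exp (223 * l))) ≤
      4 * ∫⁻ p, G p := by
    rw [hsum, ← mul_assoc, mul_comm, ← mul_assoc]
    have : ENNReal.ofReal (Real.exp (223 * l)) * 4 = ENNReal.ofReal (4 * Real.exp (223 * l)) := by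
      rw [ENNReal.ofReal_mul (by norm_num), mul_comm]; norm_num
    rw [this, ← lintegral_indicator_const (measurableSet_biball 1)]
    refine lintegral_mono fun p => ?_
    by_cases hp : p ∈ biball ι κ 1
    swap
    · rw [Set.indicator_of_notMem hp]; exact zero_le
    rw [Set.indicator_of_mem hp]
    have neg1 : (-p.1, p.2) ∈ biball ι κ 1 := ⟨by simpa [eball, nsq_neg] using hp.1, hp.2⟩
    have neg2 : (p.1, -p.2) ∈ biball ι κ 1 := ⟨hp.1, by simpa [eball, nsq_neg] using hp.2⟩
    have neg3 : (-p.1, -p.2) ∈ biball ι κ 1 := ⟨neg1.1, neg2.2⟩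
    simp only [hG]
    rw [Set.indicator_of_mem hp, Set.indicator_of_mem neg1, Set.indicator_of_mem neg2,
      Set.indicator_of_mem neg3, ← ENNReal.ofReal_add (Real.exp_pos _).le (Real.exp_pos _).le,
      ← ENNReal.ofReal_add (by positivity) (Real.exp_pos _).le,
      ← ENNReal.ofReal_add (by positivity) (Real.exp_pos _).le]
    refine ENNReal.ofReal_le_ofReal (four_exp_le ?_)
    have := hφ.sign_average_ge hx hy ht hc hmax hp.1 hp.2
    simp only [← sub_eq_add_neg]
    nlinarith
  exact (ENNReal.mul_le_mul_iff_right (by norm_num) (by norm_num)).1 h4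

lemma exp_integral_ge (hφ : BiquadFamily V φ) {c : S → ℝ} (hc : c ∉ unitBody φ) {l : ℝ}
    (hl : 0 ≤ l) :
    volume (biball ι κ 1) * ENNReal.ofReal (Real.exp (223 * l)) ≤
      ∫⁻ p in biball ι κ 5, (ENNReal.ofReal (Real.exp (l * comb φ c p.1 p.2)) +
        ENNReal.ofReal (Real.exp (-l * comb φ c p.1 p.2))) := by
  obtain ⟨x, y, t, hx, hy, ht, habs, hmax⟩ := hφ.exists_max hc
  rcases (abs_eq (by linarith)).1 habs with h | h
  · exact (exp_integral_ge_aux hφ hl hx hy ht h hmax).trans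
      (lintegral_mono fun p => le_self_add)
  · have h' : comb φ (-c) x y = t := by rw [comb_neg, h, neg_neg]
    refine (exp_integral_ge_aux hφ hl hx hy ht h' fun v w => ?_).trans
      (lintegral_mono fun p => ?_)
    · rw [comb_neg, abs_neg]; exact hmax v w
    · simp only [comb_neg, mul_neg, neg_mul]
      exact le_add_self

lemma lintegral_exp_comb {a : ℝ} (ha : 0 < a) (z : S → ℝ) :
    ∫⁻ c : S → ℝ, ENNReal.ofReal (Real.exp (-(a * ∑ s, c s ^ 2))) *
        ENNReal.ofReal (Real.exp (∑ s, c s * z s)) =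
      ENNReal.ofReal (√(Real.pi / a) ^ Fintype.card S) *
        ENNReal.ofReal (Real.exp ((∑ s, z s ^ 2) / (4 * a))) := by
  classical
  rw [← lintegral_exp_sq ha, ← lintegral_sub_right_eq_self (μ := volume)
    (fun c : S → ℝ => ENNReal.ofReal (Real.exp (-(a * ∑ i, c i ^ 2)))) ((2 * a)⁻¹ • z),
    ← lintegral_mul_const _ (by fun_prop)]
  refine lintegral_congr fun c => ?_
  rw [← ENNReal.ofReal_mul (Real.exp_pos _).le, ← ENNReal.ofReal_mul (Real.exp_pos _).le,
    ← Real.exp_add, ← Real.exp_add]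
  congr 2
  simp only [Finset.mul_sum, Finset.sum_div, ← Finset.sum_neg_distrib, ← Finset.sum_add_distrib]
  refine Finset.sum_congr rfl fun s _ => ?_
  simp only [Pi.sub_apply, Pi.smul_apply, smul_eq_mul]
  field_simp
  ring

lemma volume_unitBody_ge (hφ : BiquadFamily V φ) (hV : 0 < V) {k : ℕ}
    (hk : Fintype.card ι + Fintype.card κ = k) (hk4 : 4 ≤ k) :
    ENNReal.ofReal (1 / 2 * √(Real.pi / (16 * k * V)) ^ Fintype.card S) ≤
      volume (unitBody φ) := by
  classical
  set a : ℝ := 16 * k * V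
  have hk0 : (4 : ℝ) ≤ k := by exact_mod_cast hk4
  have ha : 0 < a := by positivity
  set l : ℝ := k / 55
  have hl : 0 ≤ l := by positivity
  set g : (S → ℝ) → ENNReal := fun c => ENNReal.ofReal (Real.exp (-(a * ∑ s, c s ^ 2))) with hg
  set W : ENNReal := ENNReal.ofReal (√(Real.pi / a) ^ Fintype.card S) with hW
  have hgm : Measurable g := by rw [hg]; fun_prop
  have hgint : ∫⁻ c, g c = W := lintegral_exp_sq ha
  set A := volume (biball ι κ 1)
  -- the expectation of the exponential moments
  have hpt (r : ℝ) (hr : r ^ 2 = l ^ 2) {p : (ι → ℝ) × (κ → ℝ)} (hp : p ∈ biball ι κ 5) :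
      ∫⁻ c, g c * ENNReal.ofReal (Real.exp (r * comb φ c p.1 p.2)) ≤
        W * ENNReal.ofReal (Real.exp (l ^ 2 * 5 ^ 8 / (64 * k))) := by
    have e (c : S → ℝ) : r * comb φ c p.1 p.2 = ∑ s, c s * (r * φ s p.1 p.2) := by
      simp only [comb, Finset.mul_sum]; exact Finset.sum_congr rfl fun s _ => by ring
    simp only [e, hg]
    rw [lintegral_exp_comb ha]
    refine mul_le_mul' le_rfl (ENNReal.ofReal_le_ofReal (Real.exp_le_exp.2 ?_))
    have hb := hφ.bound p.1 p.2
    have n1 : nsq p.1 ≤ 5 ^ 2 := hp.1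
    have n2 : nsq p.2 ≤ 5 ^ 2 := hp.2
    have n3 : nsq p.1 ^ 2 * nsq p.2 ^ 2 ≤ (5 ^ 2) ^ 2 * (5 ^ 2) ^ 2 := by
      gcongr <;> exact nsq_nonneg _
    have hs : ∑ s, (r * φ s p.1 p.2) ^ 2 ≤ l ^ 2 * (V * ((5 ^ 2) ^ 2 * (5 ^ 2) ^ 2)) := by
      simp only [mul_pow, ← Finset.mul_sum, hr]
      gcongr
      exact hb.trans (by gcongr)
    calc (∑ s, (r * φ s p.1 p.2) ^ 2) / (4 * a)
        ≤ l ^ 2 * (V * ((5 ^ 2) ^ 2 * (5 ^ 2) ^ 2)) / (4 * a) := by gcongr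
      _ = l ^ 2 * 5 ^ 8 / (64 * k) := by simp only [a]; field_simp; ring
  have hjm (r : ℝ) : Measurable fun q : (S → ℝ) × ((ι → ℝ) × (κ → ℝ)) =>
      g q.1 * ENNReal.ofReal (Real.exp (r * comb φ q.1 q.2.1 q.2.2)) := by
    refine (hgm.comp measurable_fst).mul (Continuous.measurable ?_)
    refine ENNReal.continuous_ofReal.comp (Real.continuous_exp.comp (continuous_const.mul ?_))
    refine continuous_finsetSum _ fun s _ => ?_
    exact ((continuous_apply s).comp continuous_fst).mul ((hφ.cont s).comp continuous_snd)
  have hexp (r : ℝ) (hr : r ^ 2 = l ^ 2) :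
      ∫⁻ c, ∫⁻ p in biball ι κ 5, g c * ENNReal.ofReal (Real.exp (r * comb φ c p.1 p.2)) ≤
        W * ENNReal.ofReal (Real.exp (l ^ 2 * 5 ^ 8 / (64 * k))) * volume (biball ι κ 5) := by
    rw [lintegral_lintegral_swap (hjm r).aemeasurable, ← setLIntegral_const]
    exact setLIntegral_mono measurable_const fun p hp => hpt r hr hp
  have htail : ∫⁻ c in (unitBody φ)ᶜ, g c * (A * ENNReal.ofReal (Real.exp (223 * l))) ≤
      2 * (W * ENNReal.ofReal (Real.exp (l ^ 2 * 5 ^ 8 / (64 * k))) * volume (biball ι κ 5)) := by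
    have s1 := hexp l rfl
    have s2 := hexp (-l) (by ring)
    have hm2 (r : ℝ) : Measurable fun c => ∫⁻ p in biball ι κ 5,
        g c * ENNReal.ofReal (Real.exp (r * comb φ c p.1 p.2)) :=
      (hjm r).lintegral_prod_right'
    rw [two_mul]
    refine le_trans ?_ (add_le_add s1 s2)
    rw [← lintegral_add_left (hm2 l)]
    refine le_trans ?_ (setLIntegral_le_lintegral (unitBody φ)ᶜ _)
    refine setLIntegral_mono ((hm2 l).add (hm2 (-l))) fun c hc => ?_
    have hm1 (r : ℝ) : Measurable fun p : (ι → ℝ) × (κ → ℝ) =>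
        ENNReal.ofReal (Real.exp (r * comb φ c p.1 p.2)) :=
      (ENNReal.continuous_ofReal.comp (Real.continuous_exp.comp
        (continuous_const.mul (hφ.continuous_comb c)))).measurable
    rw [lintegral_const_mul _ (hm1 l), lintegral_const_mul _ (hm1 (-l)), ← mul_add,
      ← lintegral_add_left (hm1 l)]
    exact mul_le_mul' le_rfl (exp_integral_ge hφ hc hl)
  have hbad : ∫⁻ c in (unitBody φ)ᶜ, g c ≤ ENNReal.ofReal (1 / 2) * W := by
    rw [lintegral_mul_const _ hgm, volume_biball (by norm_num), hk] at htail
    have hE : 2 * (Real.exp (l ^ 2 * 5 ^ 8 / (64 * k)) * 5 ^ k) ≤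
        1 / 2 * Real.exp (223 * l) := by
      have e1 : l ^ 2 * 5 ^ 8 / (64 * k) ≤ (k : ℝ) * (-2) + 223 * l := by
        have : l ^ 2 * 5 ^ 8 / (64 * k) = (k : ℝ) * (5 ^ 8 / (64 * 55 ^ 2)) := by
          simp only [l]; field_simp
        rw [this]; simp only [l]; nlinarith
      have e2 : Real.exp (l ^ 2 * 5 ^ 8 / (64 * k)) ≤ Real.exp (-2) ^ k * Real.exp (223 * l) := by
        rw [← Real.exp_nat_mul, ← Real.exp_add]; exact Real.exp_le_exp.2 e1
      have e3 : (Real.exp (-2) * 5) ^ k ≤ 1 / 4 := by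
        have q : Real.exp (-2) * 5 ≤ 0.7 := by
          have h1 := Real.exp_one_gt_d9
          have h2 : Real.exp (-2) = (Real.exp 1 * Real.exp 1)⁻¹ := by
            rw [← Real.exp_add, ← Real.exp_neg]; norm_num
          rw [h2, inv_mul_le_iff₀ (by positivity)]
          nlinarith
        calc (Real.exp (-2) * 5) ^ k ≤ 0.7 ^ k := by gcongr
          _ ≤ 0.7 ^ 4 := pow_le_pow_of_le_one (by norm_num) (by norm_num) hk4
          _ ≤ 1 / 4 := by norm_num
      calc 2 * (Real.exp (l ^ 2 * 5 ^ 8 / (64 * k)) * 5 ^ k)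
          ≤ 2 * ((Real.exp (-2) ^ k * Real.exp (223 * l)) * 5 ^ k) := by gcongr
        _ = 2 * ((Real.exp (-2) * 5) ^ k * Real.exp (223 * l)) := by rw [mul_pow]; ring
        _ ≤ 2 * (1 / 4 * Real.exp (223 * l)) := by gcongr
        _ = _ := by ring
    set P := ∫⁻ c in (unitBody φ)ᶜ, g c
    have hA0 : A ≠ 0 := volume_biball_ne_zero
    have hA1 : A ≠ ⊤ := volume_biball_ne_top
    have hX0 : A * ENNReal.ofReal (Real.exp (223 * l)) ≠ 0 :=
      mul_ne_zero hA0 (ENNReal.ofReal_pos.2 (Real.exp_pos _)).ne'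
    have hX1 : A * ENNReal.ofReal (Real.exp (223 * l)) ≠ ⊤ :=
      ENNReal.mul_ne_top hA1 ENNReal.ofReal_ne_top
    refine (ENNReal.mul_le_mul_iff_left hX0 hX1).1 (htail.trans ?_)
    calc 2 * (W * ENNReal.ofReal (Real.exp (l ^ 2 * 5 ^ 8 / (64 * k))) *
          (ENNReal.ofReal (5 ^ k) * A))
        = W * A * (ENNReal.ofReal (2 * (Real.exp (l ^ 2 * 5 ^ 8 / (64 * k)) * 5 ^ k))) := by
          rw [ENNReal.ofReal_mul (by norm_num), ENNReal.ofReal_mul (Real.exp_pos _).le,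
            ENNReal.ofReal_ofNat]
          ring
      _ ≤ W * A * ENNReal.ofReal (1 / 2 * Real.exp (223 * l)) :=
          mul_le_mul' le_rfl (ENNReal.ofReal_le_ofReal hE)
      _ = _ := by rw [ENNReal.ofReal_mul (by norm_num)]; ring
  have hsplit := lintegral_add_compl (μ := volume) g (isClosed_unitBody (φ := φ)).measurableSet
  rw [hgint] at hsplit
  have hgood : ∫⁻ c in unitBody φ, g c ≤ volume (unitBody φ) := by
    rw [← setLIntegral_one]
    refine setLIntegral_mono measurable_const fun c _ => ?_
    rw [hg, ← ENNReal.ofReal_one]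
    refine ENNReal.ofReal_le_ofReal (Real.exp_le_one_iff.2 ?_)
    have : 0 ≤ ∑ s, c s ^ 2 := Finset.sum_nonneg fun _ _ => sq_nonneg _
    nlinarith
  have hWtop : ENNReal.ofReal (1 / 2) * W ≠ ⊤ :=
    ENNReal.mul_ne_top ENNReal.ofReal_ne_top ENNReal.ofReal_ne_top
  rw [ENNReal.ofReal_mul (by norm_num), ← hW]
  refine le_trans ?_ hgood
  have hhalf : W = ENNReal.ofReal (1 / 2) * W + ENNReal.ofReal (1 / 2) * W := by
    rw [← add_mul, ← ENNReal.ofReal_add (by norm_num) (by norm_num)]; norm_num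
  have : ENNReal.ofReal (1 / 2) * W + ENNReal.ofReal (1 / 2) * W ≤
      (∫⁻ c in unitBody φ, g c) + ENNReal.ofReal (1 / 2) * W := by
    rw [← hhalf]
    exact hsplit.symm.le.trans (add_le_add le_rfl hbad)
  exact (ENNReal.add_le_add_iff_right hWtop).1 this

end Tail

section Cone

variable {S : Type} [Fintype S]

lemma continuous_linearForm (ℓ : (S → ℝ) →ₗ[ℝ] ℝ) : Continuous ℓ :=
  LinearMap.continuous_of_finiteDimensional ℓ

/-- Lower bound for an exponential integral over a cone containing a translated body. -/
lemma expInt_ge (K G : Set (S → ℝ)) (ℓ : (S → ℝ) →ₗ[ℝ] ℝ) (q : S → ℝ)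
    (hq : 0 < ℓ q) (hGm : MeasurableSet G) (hsymm : ∀ c ∈ G, -c ∈ G)
    (hGK : ∀ c ∈ G, q + c ∈ K) (hK : ∀ t : ℝ, 0 < t → ∀ b ∈ K, t • b ∈ K)
    (hS : 0 < Fintype.card S) :
    ENNReal.ofReal (1 / 2 * (Real.exp (-(Fintype.card S : ℝ)) *
      (Fintype.card S / ℓ q) ^ Fintype.card S)) * volume G ≤ expInt K ℓ := by
  set d := Fintype.card S
  have hd : (0 : ℝ) < d := by exact_mod_cast hS
  set s : ℝ := d / ℓ q
  have hs : 0 < s := div_pos hd hq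
  set G' := G ∩ {c | ℓ c ≤ 0}
  have hG'm : MeasurableSet G' :=
    hGm.inter (isClosed_le (continuous_linearForm ℓ) continuous_const).measurableSet
  have hhalf : volume G ≤ 2 * volume G' := by
    have hsub : G ⊆ G' ∪ Neg.neg ⁻¹' G' := by
      intro c hc
      rcases le_total (ℓ c) 0 with h | h
      · exact Or.inl ⟨hc, h⟩
      · exact Or.inr ⟨hsymm c hc, by simpa using h⟩
    refine (measure_mono hsub).trans ((measure_union_le _ _).trans ?_)
    rw [(Measure.measurePreserving_neg (volume : Measure (S → ℝ))).measure_preimage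
      hG'm.nullMeasurableSet, two_mul]
  set A : Set (S → ℝ) := (fun a => s⁻¹ • a) ⁻¹' ((fun a => a - q) ⁻¹' G')
  have hAm : MeasurableSet A :=
    (measurable_const_smul s⁻¹) ((measurable_id.sub_const q) hG'm)
  have hAv : volume A = ENNReal.ofReal (s ^ d) * volume G' := by
    rw [Measure.addHaar_preimage_smul _ (inv_ne_zero hs.ne'), Module.finrank_fintype_fun_eq_card,
      (measurePreserving_sub_right volume q).measure_preimage hG'm.nullMeasurableSet]
    congr 2
    rw [inv_pow, inv_inv, abs_of_pos (by positivity)]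
  have hA : ENNReal.ofReal (Real.exp (-(d : ℝ))) * volume A ≤ expInt K ℓ := by
    rw [← lintegral_indicator_const hAm]
    refine lintegral_mono fun a => ?_
    by_cases ha : a ∈ A
    swap
    · rw [Set.indicator_of_notMem ha]; exact zero_le
    have haK : a ∈ K := by
      have := hK s hs _ (hGK _ ha.1)
      rwa [add_sub_cancel, smul_inv_smul₀ hs.ne'] at this
    rw [Set.indicator_of_mem ha, Set.indicator_of_mem haK]
    refine ENNReal.ofReal_le_ofReal (Real.exp_le_exp.2 (neg_le_neg ?_))
    have h : ℓ (s⁻¹ • a - q) ≤ 0 := ha.2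
    rw [map_sub, map_smul, smul_eq_mul, sub_nonpos, inv_mul_le_iff₀ hs] at h
    calc ℓ a ≤ s * ℓ q := h
      _ = d := by simp only [s]; field_simp
  refine le_trans ?_ hA
  rw [hAv, ENNReal.ofReal_mul (by norm_num), ENNReal.ofReal_mul (Real.exp_pos _).le]
  calc ENNReal.ofReal (1 / 2) * (ENNReal.ofReal (Real.exp (-(d : ℝ))) * ENNReal.ofReal (s ^ d)) *
        volume G
      ≤ ENNReal.ofReal (1 / 2) * (ENNReal.ofReal (Real.exp (-(d : ℝ))) * ENNReal.ofReal (s ^ d)) *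
        (2 * volume G') := mul_le_mul' le_rfl hhalf
    _ = (ENNReal.ofReal (1 / 2) * ENNReal.ofReal 2) * (ENNReal.ofReal (Real.exp (-(d : ℝ))) *
        (ENNReal.ofReal (s ^ d) * volume G')) := by rw [ENNReal.ofReal_ofNat]; ring
    _ = _ := by rw [← ENNReal.ofReal_mul (by norm_num)]; norm_num

end Cone

section Biquadratic

variable {ι κ : Type} [Fintype ι] [DecidableEq ι] [Fintype κ] [DecidableEq κ]

/-- The biquadratic form with monomial coefficients `b`. -/
def bq (b : Sym2 ι × Sym2 κ → ℝ) (x : ι → ℝ) (y : κ → ℝ) : ℝ :=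
  ∑ p, b p * (mon x p.1 * mon y p.2)

/-- The sum of the values of a biquadratic form on pairs of standard basis vectors. -/
def btr (ι κ : Type) [Fintype ι] [Fintype κ] : (Sym2 ι × Sym2 κ → ℝ) →ₗ[ℝ] ℝ :=
  ∑ i, ∑ k, LinearMap.proj (s(i, i), s(k, k))

lemma btr_apply (b : Sym2 ι × Sym2 κ → ℝ) : btr ι κ b = ∑ i, ∑ k, b (s(i, i), s(k, k)) := by
  simp [btr]

/-- The coefficients of the biforms which are nonnegative. -/
def posC (ι κ : Type) [Fintype ι] [Fintype κ] : Set (Sym2 ι × Sym2 κ → ℝ) :=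
  {b | ∀ x y, 0 ≤ bq b x y}

/-- The bidegree components of an unordered pair of index pairs. -/
def comp (r : Sym2 (ι × κ)) : Sym2 ι × Sym2 κ := (r.map Prod.fst, r.map Prod.snd)

@[simp] lemma comp_mk (a b : ι × κ) : comp s(a, b) = (s(a.1, b.1), s(a.2, b.2)) := rfl

lemma comp_surjective : Function.Surjective (comp : Sym2 (ι × κ) → _) := by
  rintro ⟨p, q⟩
  induction p with | _ i j =>
  induction q with | _ k l => exact ⟨s((i, k), (j, l)), rfl⟩

/-- The restriction of quadratic forms on `ℝ^(ι × κ)` to rank one tensors. -/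
def restr (ι κ : Type) [Fintype ι] [DecidableEq ι] [Fintype κ] [DecidableEq κ] :
    (Sym2 (ι × κ) → ℝ) →ₗ[ℝ] (Sym2 ι × Sym2 κ → ℝ) :=
  LinearMap.pi fun s => ∑ r with comp r = s, LinearMap.proj r

lemma restr_apply (a : Sym2 (ι × κ) → ℝ) (s : Sym2 ι × Sym2 κ) :
    restr ι κ a s = ∑ r with comp r = s, a r := by simp [restr]

/-- The rank one tensor `x ⊗ y`. -/
def tens (x : ι → ℝ) (y : κ → ℝ) (p : ι × κ) : ℝ := x p.1 * y p.2

lemma mon_tens (x : ι → ℝ) (y : κ → ℝ) (r : Sym2 (ι × κ)) :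
    mon (tens x y) r = mon x (comp r).1 * mon y (comp r).2 := by
  induction r with | _ a b => simp [tens]; ring

lemma nsq_tens (x : ι → ℝ) (y : κ → ℝ) : nsq (tens x y) = nsq x * nsq y := by
  simp [nsq, tens, Fintype.sum_prod_type, mul_pow, Finset.sum_mul_sum]

lemma bq_restr (a : Sym2 (ι × κ) → ℝ) (x : ι → ℝ) (y : κ → ℝ) :
    bq (restr ι κ a) x y = qf a (tens x y) := by
  simp only [bq, qf, restr_apply, mon_tens, Finset.sum_mul]
  rw [← Finset.sum_fiberwise (s := Finset.univ) (g := comp)]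
  refine Finset.sum_congr rfl fun s _ => Finset.sum_congr rfl fun r hr => ?_
  rw [(Finset.mem_filter.1 hr).2]

lemma bq_single (b : Sym2 ι × Sym2 κ → ℝ) (i : ι) (k : κ) :
    bq b (Pi.single i 1) (Pi.single k 1) = b (s(i, i), s(k, k)) := by
  unfold bq
  rw [Finset.sum_eq_single (s(i, i), s(k, k))]
  · simp
  · rintro ⟨p, q⟩ - h
    simp only [mon_single, ne_eq, Prod.mk.injEq, not_and_or] at h ⊢
    rcases h with h | h <;> simp [h]
  · simp

lemma tens_single (i : ι) (k : κ) :
    tens (Pi.single i 1) (Pi.single k 1) = Pi.single (i, k) 1 := by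
  ext ⟨a, b⟩
  by_cases h : a = i <;> by_cases h' : b = k <;> simp [tens, h, h']

lemma btr_restr (a : Sym2 (ι × κ) → ℝ) : btr ι κ (restr ι κ a) = tr a := by
  simp only [btr_apply, ← bq_single, bq_restr, tens_single, qf_single, tr, Fintype.sum_prod_type]

/-- The coefficients of the biforms which are sums of squares. -/
def sqC (ι κ : Type) [Fintype ι] [DecidableEq ι] [Fintype κ] [DecidableEq κ] :
    Set (Sym2 ι × Sym2 κ → ℝ) := restr ι κ '' psd (ι × κ)

/-- The quadratic form `∑ uᵢ²`. -/
def one (ι : Type) [Fintype ι] [DecidableEq ι] : Sym2 ι → ℝ := ∑ i, sqc (Pi.single i 1)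

lemma qf_sum {T : Type} (s : Finset T) (f : T → Sym2 ι → ℝ) (u : ι → ℝ) :
    qf (∑ t ∈ s, f t) u = ∑ t ∈ s, qf (f t) u := by
  simp only [qf, Finset.sum_apply, Finset.sum_mul]
  exact Finset.sum_comm

lemma qf_one (u : ι → ℝ) : qf (one ι) u = nsq u := by
  simp [one, qf_sum, qf_sqc, nsq, Pi.single_apply]

lemma tr_one : tr (one ι) = Fintype.card ι := by
  simp [tr_eq_sum_qf, qf_one, nsq, Pi.single_apply]

/-- The biform `(∑ xᵢ²) (∑ yₖ²)`. -/
def qC (ι κ : Type) [Fintype ι] [DecidableEq ι] [Fintype κ] [DecidableEq κ] :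
    Sym2 ι × Sym2 κ → ℝ := restr ι κ (one (ι × κ))

lemma bq_qC (x : ι → ℝ) (y : κ → ℝ) : bq (qC ι κ) x y = nsq x * nsq y := by
  rw [qC, bq_restr, qf_one, nsq_tens]

lemma btr_qC : btr ι κ (qC ι κ) = Fintype.card ι * Fintype.card κ := by
  rw [qC, btr_restr, tr_one, Fintype.card_prod]; push_cast; ring

lemma bq_add (a b : Sym2 ι × Sym2 κ → ℝ) (x : ι → ℝ) (y : κ → ℝ) :
    bq (a + b) x y = bq a x y + bq b x y := by
  simp [bq, add_mul, Finset.sum_add_distrib]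

lemma bq_smul (t : ℝ) (a : Sym2 ι × Sym2 κ → ℝ) (x : ι → ℝ) (y : κ → ℝ) :
    bq (t • a) x y = t * bq a x y := by
  simp [bq, mul_assoc, Finset.mul_sum]

lemma smul_mem_posC {t : ℝ} (ht : 0 < t) {b : Sym2 ι × Sym2 κ → ℝ} (hb : b ∈ posC ι κ) :
    t • b ∈ posC ι κ := fun x y => by
  rw [bq_smul]; exact mul_nonneg ht.le (hb x y)

lemma smul_mem_sqC {t : ℝ} (ht : 0 < t) {b : Sym2 ι × Sym2 κ → ℝ} (hb : b ∈ sqC ι κ) :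
    t • b ∈ sqC ι κ := by
  obtain ⟨a, ha, rfl⟩ := hb
  exact ⟨t • a, smul_mem_psd ht.le ha, map_smul _ _ _⟩

lemma biquadFamily_mon :
    BiquadFamily 1 fun (p : Sym2 ι × Sym2 κ) x y => mon x p.1 * mon y p.2 where
  cont p := ((continuous_mon p.1).comp continuous_fst).mul
    ((continuous_mon p.2).comp continuous_snd)
  par_left p x v y := by linear_combination mon y p.2 * mon_parallelogram x v p.1
  par_right p x y w := by linear_combination mon x p.1 * mon_parallelogram y w p.2
  smul_left p t x y := by simp only [mon_smul]; ring
  smul_right p t x y := by simp only [mon_smul]; ring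
  bound x y := by
    simp only [mul_pow, Fintype.sum_prod_type, ← Finset.sum_mul_sum, one_mul]
    exact mul_le_mul (sum_mon_sq_le x) (sum_mon_sq_le y)
      (Finset.sum_nonneg fun _ _ => sq_nonneg _) (sq_nonneg _)

lemma neg_mem_unitBody {S : Type} [Fintype S] {φ : S → (ι → ℝ) → (κ → ℝ) → ℝ} {c : S → ℝ}
    (hc : c ∈ unitBody φ) : -c ∈ unitBody φ := fun x y => by
  rw [comb_neg, abs_neg]; exact hc x y

/-- The lower bound for the exponential integrals over the two cones. -/
def lowerBound (N d k : ℕ) : ℝ :=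
  1 / 2 * (Real.exp (-(d : ℝ)) * (d / N) ^ d) * (1 / 2 * √(Real.pi / (16 * k * 1)) ^ d)

lemma expInt_posC_ge {N d : ℕ} (hN : Fintype.card ι * Fintype.card κ = N) (hN0 : 0 < N)
    (hd : Fintype.card (Sym2 ι × Sym2 κ) = d) (hd0 : 0 < d)
    {k : ℕ} (hk : Fintype.card ι + Fintype.card κ = k) (hk4 : 4 ≤ k) :
    ENNReal.ofReal (lowerBound N d k) ≤ expInt (posC ι κ) (btr ι κ) := by
  subst hd
  have hq : btr ι κ (qC ι κ) = N := by rw [btr_qC, ← hN]; push_cast; ring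
  let φ := fun (p : Sym2 ι × Sym2 κ) (x : ι → ℝ) (y : κ → ℝ) => mon x p.1 * mon y p.2
  refine le_trans ?_ (expInt_ge (posC ι κ) (unitBody φ) (btr ι κ) (qC ι κ)
    (by rw [hq]; exact_mod_cast hN0) isClosed_unitBody.measurableSet (fun _ => neg_mem_unitBody)
    (fun c hc x y => ?_) (fun t ht b => smul_mem_posC ht) hd0)
  · rw [lowerBound, ENNReal.ofReal_mul (by positivity), hq]
    exact mul_le_mul' le_rfl (volume_unitBody_ge biquadFamily_mon one_pos hk hk4)
  · rw [bq_add, bq_qC]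
    have := (abs_le.1 (hc x y)).1
    have e : comb φ c x y = bq c x y := rfl
    linarith

/-- A right inverse of `comp`. -/
def lft : Sym2 ι × Sym2 κ → Sym2 (ι × κ) := Function.surjInv comp_surjective

lemma comp_lft (s : Sym2 ι × Sym2 κ) : comp (lft s) = s := Function.surjInv_eq _ s

lemma lft_injective : Function.Injective (lft : Sym2 ι × Sym2 κ → _) :=
  Function.LeftInverse.injective comp_lft

/-- The quadratic form with coefficients `c` supported on the range of `lft`. -/
def lift (c : Sym2 ι × Sym2 κ → ℝ) (r : Sym2 (ι × κ)) : ℝ :=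
  if lft (comp r) = r then c (comp r) else 0

lemma sum_lift (c : Sym2 ι × Sym2 κ → ℝ) (s : Sym2 ι × Sym2 κ) (g : Sym2 (ι × κ) → ℝ) :
    ∑ r with comp r = s, lift c r * g r = c s * g (lft s) := by
  rw [Finset.sum_eq_single (lft s)]
  · simp [lift, comp_lft]
  · intro r hr h
    rw [Finset.mem_filter] at hr
    rw [lift, if_neg, zero_mul]
    rw [hr.2]; exact h.symm
  · simp [comp_lft]

lemma restr_lift (c : Sym2 ι × Sym2 κ → ℝ) : restr ι κ (lift c) = c := by
  ext s
  have := sum_lift c s 1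
  simpa [restr_apply] using this

lemma qf_lift (c : Sym2 ι × Sym2 κ → ℝ) (u : ι × κ → ℝ) :
    qf (lift c) u = ∑ s, c s * mon u (lft s) := by
  unfold qf
  rw [← Finset.sum_fiberwise (s := Finset.univ) (g := comp)]
  exact Finset.sum_congr rfl fun s _ => sum_lift c s (mon u)

lemma biquadFamily_lft :
    BiquadFamily 1 fun (s : Sym2 ι × Sym2 κ) (u : ι × κ → ℝ) (y : Unit → ℝ) =>
      mon u (lft s) * y () ^ 2 where
  cont p := ((continuous_mon _).comp continuous_fst).mul (by fun_prop)
  par_left p x v y := by linear_combination y () ^ 2 * mon_parallelogram x v (lft p)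
  par_right p x y w := by simp only [Pi.add_apply, Pi.sub_apply]; ring
  smul_left p t x y := by simp only [mon_smul]; ring
  smul_right p t x y := by simp only [Pi.smul_apply, smul_eq_mul]; ring
  bound u y := by
    have h : ∑ s : Sym2 ι × Sym2 κ, mon u (lft s) ^ 2 ≤ nsq u ^ 2 := by
      rw [← Finset.sum_image (s := Finset.univ) (f := fun r => mon u r ^ 2)
        (fun a _ b _ h => lft_injective h)]
      exact (Finset.sum_le_univ_sum_of_nonneg fun r => sq_nonneg _).trans (sum_mon_sq_le u)
    have e : nsq y = y () ^ 2 := by simp [nsq]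
    simp only [mul_pow, ← Finset.sum_mul, one_mul, e]
    gcongr

lemma expInt_sqC_ge {N d : ℕ} (hN : Fintype.card ι * Fintype.card κ = N) (hN4 : 4 ≤ N)
    (hd : Fintype.card (Sym2 ι × Sym2 κ) = d) (hd0 : 0 < d) :
    ENNReal.ofReal (lowerBound N d (N + 1)) ≤ expInt (sqC ι κ) (btr ι κ) := by
  subst hd
  have hq : btr ι κ (qC ι κ) = N := by rw [btr_qC, ← hN]; push_cast; ring
  let φ := fun (s : Sym2 ι × Sym2 κ) (u : ι × κ → ℝ) (y : Unit → ℝ) => mon u (lft s) * y () ^ 2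
  refine le_trans ?_ (expInt_ge (sqC ι κ) (unitBody φ) (btr ι κ) (qC ι κ)
    (by rw [hq]; exact_mod_cast (by omega : 0 < N)) isClosed_unitBody.measurableSet
    (fun _ => neg_mem_unitBody)
    (fun c hc => ⟨one (ι × κ) + lift c, fun u => ?_, ?_⟩) (fun t ht b => smul_mem_sqC ht) hd0)
  · rw [lowerBound, ENNReal.ofReal_mul (by positivity), hq]
    exact mul_le_mul' le_rfl (volume_unitBody_ge biquadFamily_lft one_pos (by simp [hN]) (by omega))
  · rw [qf_add, qf_one, qf_lift]
    have := (abs_le.1 (hc u 1)).1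
    simp [comb, nsq, φ] at this
    simp only [nsq]
    linarith
  · rw [map_add, restr_lift]; rfl

end Biquadratic

section Shear

variable {T E : Type} [Fintype T] [AddCommGroup E] [MeasureSpace E] [MeasurableAdd₂ E]
  [SigmaFinite (volume : Measure E)] [(volume : Measure E).IsAddRightInvariant]

/-- Invariance of the integral under a shear which moves the coordinates outside of `P` by an
amount depending on the coordinates in `P`. -/
lemma lintegral_shear (P : T → Prop) [DecidablePred P] (τ : (T → E) → T → E)
    (hτ : Measurable τ) (hdep : ∀ B B' : T → E, (∀ t, P t → B t = B' t) → τ B = τ B')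
    (hzero : ∀ B t, P t → τ B t = 0) {f : (T → E) → ENNReal} (hf : Measurable f) :
    ∫⁻ B, f (B + τ B) = ∫⁻ B, f B := by
  let e := MeasurableEquiv.piEquivPiSubtypeProd (fun _ : T => E) P
  have he : MeasurePreserving e.symm :=
    (volume_preserving_piEquivPiSubtypeProd (fun _ : T => E) P).symm e
  have hf' : Measurable fun B => f (B + τ B) := hf.comp (measurable_id.add hτ)
  have : (volume : Measure ({t // ¬ P t} → E)).IsAddRightInvariant :=
    inferInstanceAs (Measure.pi fun _ => volume).IsAddRightInvariant
  have m1 : Measurable fun z => f (e.symm z) := hf.comp e.symm.measurable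
  have m2 : Measurable fun z => f (e.symm z + τ (e.symm z)) := hf'.comp e.symm.measurable
  rw [← he.lintegral_comp hf, ← he.lintegral_comp hf', Measure.volume_eq_prod,
    lintegral_prod _ m1.aemeasurable, lintegral_prod _ m2.aemeasurable]
  refine lintegral_congr fun D => ?_
  rw [← lintegral_add_right_eq_self (fun O => f (e.symm (D, O)))
    (fun t : {t // ¬ P t} => τ (e.symm (D, 0)) t)]
  refine lintegral_congr fun O => congrArg f (funext fun t => ?_)
  have h0 : τ (e.symm (D, O)) = τ (e.symm (D, 0)) :=
    hdep _ _ fun t ht => by simp [e, MeasurableEquiv.piEquivPiSubtypeProd,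
      Equiv.piEquivPiSubtypeProd, ht]
  rw [Pi.add_apply, h0]
  by_cases ht : P t
  · rw [hzero _ _ ht]
    simp [e, MeasurableEquiv.piEquivPiSubtypeProd, Equiv.piEquivPiSubtypeProd, ht]
  · simp [e, MeasurableEquiv.piEquivPiSubtypeProd, Equiv.piEquivPiSubtypeProd, ht]

lemma lintegral_comp_smul {S : Type} [Fintype S] {r : ℝ} (hr : 0 < r)
    {f : (S → ℝ) → ENNReal} (hf : Measurable f) :
    ∫⁻ a, f (r⁻¹ • a) = ENNReal.ofReal (r ^ Fintype.card S) * ∫⁻ a, f a := by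
  rw [← lintegral_map hf (measurable_const_smul r⁻¹),
    Measure.map_addHaar_smul _ (inv_ne_zero hr.ne'), lintegral_smul_measure,
    Module.finrank_fintype_fun_eq_card, inv_pow, inv_inv, abs_of_pos (by positivity), smul_eq_mul]

end Shear

section PosBound

variable {ι κ : Type} [Fintype ι] [DecidableEq ι] [Fintype κ] [DecidableEq κ]

lemma mon_single_add_single {i j : ι} (h : i ≠ j) (p : Sym2 ι) :
    mon (Pi.single i 1 + Pi.single j 1) p =
      (if p = s(i, i) then 1 else 0) + (if p = s(j, j) then 1 else 0) +
        (if p = s(i, j) then 1 else 0) := by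
  induction p with
  | _ a b =>
    simp only [mon_mk, Pi.add_apply, Pi.single_apply, Sym2.eq_iff]
    by_cases h1 : a = i <;> by_cases h2 : a = j <;> by_cases h3 : b = i <;> by_cases h4 : b = j <;>
      subst_vars <;> simp_all

/-- The quadratic form in `y` obtained by fixing `x`. -/
def slice (B : Sym2 ι → Sym2 κ → ℝ) (x : ι → ℝ) : Sym2 κ → ℝ := ∑ p, mon x p • B p

lemma qf_slice (B : Sym2 ι → Sym2 κ → ℝ) (x : ι → ℝ) (y : κ → ℝ) :
    qf (slice B x) y = bq (fun p => B p.1 p.2) x y := by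
  rw [slice, qf_sum]
  simp only [bq, Fintype.sum_prod_type, qf, Pi.smul_apply, smul_eq_mul]
  exact Finset.sum_congr rfl fun p _ => Finset.sum_congr rfl fun r _ => by ring

lemma slice_single (B : Sym2 ι → Sym2 κ → ℝ) (i : ι) : slice B (Pi.single i 1) = B s(i, i) := by
  simp [slice, mon_single]

lemma slice_single_add_single (B : Sym2 ι → Sym2 κ → ℝ) {i j : ι} (h : i ≠ j) :
    slice B (Pi.single i 1 + Pi.single j 1) = B s(i, j) + (B s(i, i) + B s(j, j)) := by
  simp only [slice, mon_single_add_single h, add_smul, Finset.sum_add_distrib, ite_smul, one_smul,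
    zero_smul, Finset.sum_ite_eq', Finset.mem_univ, if_true]
  abel

lemma slice_parallelogram (B : Sym2 ι → Sym2 κ → ℝ) (x v : ι → ℝ) :
    slice B (x + v) + slice B (x - v) = (2 : ℝ) • slice B x + (2 : ℝ) • slice B v := by
  simp only [slice, Finset.smul_sum, ← Finset.sum_add_distrib, smul_smul, ← add_smul,
    mon_parallelogram]

/-- The sum of the diagonal coefficients belonging to the two indices of a non-diagonal pair. -/
def diagShift (B : Sym2 ι → Sym2 κ → ℝ) (p : Sym2 ι) : Sym2 κ → ℝ :=
  if p.IsDiag then 0 else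
    Sym2.lift ⟨fun i j => B s(i, i) + B s(j, j), fun _ _ => add_comm _ _⟩ p

lemma measurable_diagShift : Measurable (diagShift : (Sym2 ι → Sym2 κ → ℝ) → _) := by
  refine measurable_pi_lambda _ fun p => ?_
  induction p with
  | _ i j =>
    unfold diagShift
    split_ifs
    · exact measurable_const
    · exact (measurable_pi_apply _).add (measurable_pi_apply _)

lemma add_diagShift_diag (B : Sym2 ι → Sym2 κ → ℝ) (i : ι) :
    (B + diagShift B) s(i, i) = slice B (Pi.single i 1) := by
  rw [slice_single]; simp [diagShift]

lemma add_diagShift_of_ne (B : Sym2 ι → Sym2 κ → ℝ) {i j : ι} (h : i ≠ j) :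
    (B + diagShift B) s(i, j) = slice B (Pi.single i 1 + Pi.single j 1) := by
  rw [slice_single_add_single B h]; simp [diagShift, h]

lemma expInt_posC_le_aux (B : Sym2 ι → Sym2 κ → ℝ) (hι : 0 < Fintype.card ι) :
    (posC ι κ).indicator (fun b => ENNReal.ofReal (Real.exp (-btr ι κ b))) (fun p => B p.1 p.2) ≤
      ∏ p, (psd κ).indicator (fun a => ENNReal.ofReal (Real.exp (-tr a)))
        ((4 * Fintype.card ι : ℝ)⁻¹ • (B + diagShift B) p) := by
  by_cases hB : (fun p : Sym2 ι × Sym2 κ => B p.1 p.2) ∈ posC ι κ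
  swap
  · rw [Set.indicator_of_notMem hB]; exact zero_le
  have hpsd (x : ι → ℝ) : slice B x ∈ psd κ := fun y => by rw [qf_slice]; exact hB x y
  have hF (p : Sym2 ι) : (B + diagShift B) p ∈ psd κ := by
    induction p with
    | _ i j =>
      by_cases h : i = j
      · subst h; rw [add_diagShift_diag]; exact hpsd _
      · rw [add_diagShift_of_ne B h]; exact hpsd _
  have hn : (0 : ℝ) < 4 * Fintype.card ι := by
    have : (0 : ℝ) < Fintype.card ι := by exact_mod_cast hι
    positivity
  set t : ι → ℝ := fun i => tr (slice B (Pi.single i 1))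
  have ht (i : ι) : 0 ≤ t i := tr_nonneg (hpsd _)
  have hbtr : btr ι κ (fun p => B p.1 p.2) = ∑ i, t i := by
    simp [btr_apply, t, slice_single, tr]
  have htr (i j : ι) : tr ((B + diagShift B) s(i, j)) ≤ 2 * (t i + t j) := by
    by_cases h : i = j
    · subst h; rw [add_diagShift_diag]
      have := ht i
      show t i ≤ _
      linarith
    · rw [add_diagShift_of_ne B h]
      have h1 := congrArg tr (slice_parallelogram B (Pi.single i 1) (Pi.single j 1))
      rw [tr_add, tr_add, tr_smul, tr_smul] at h1
      have h2 := tr_nonneg (hpsd (Pi.single i 1 - Pi.single j 1))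
      simp only [t]
      linarith
  have hsum : ∑ p, tr ((B + diagShift B) p) ≤ 4 * Fintype.card ι * ∑ i, t i := by
    refine (sum_sym2_le fun p => tr_nonneg (hF p)).trans ?_
    calc ∑ i, ∑ j, tr ((B + diagShift B) s(i, j)) ≤ ∑ i, ∑ j, 2 * (t i + t j) :=
          Finset.sum_le_sum fun i _ => Finset.sum_le_sum fun j _ => htr i j
      _ = _ := by
          simp only [← Finset.mul_sum, Finset.sum_add_distrib, Finset.sum_const, Finset.card_univ,
            nsmul_eq_mul]
          ring
  rw [Set.indicator_of_mem hB,
    Finset.prod_congr rfl fun p _ => Set.indicator_of_mem (smul_mem_psd (inv_nonneg.2 hn.le) (hF p))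
      (fun a => ENNReal.ofReal (Real.exp (-tr a))),
    ← ENNReal.ofReal_prod_of_nonneg fun p _ => (Real.exp_pos _).le, ← Real.exp_sum]
  refine ENNReal.ofReal_le_ofReal (Real.exp_le_exp.2 ?_)
  rw [Finset.sum_neg_distrib, hbtr, neg_le_neg_iff]
  simp only [tr_smul, ← Finset.mul_sum]
  rwa [inv_mul_le_iff₀ hn]

lemma expInt_posC_le (hι : 0 < Fintype.card ι) :
    expInt (posC ι κ) (btr ι κ) ≤
      ENNReal.ofReal ((4 * Fintype.card ι) ^ Fintype.card (Sym2 ι × Sym2 κ)) *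
        expInt (psd κ) tr ^ Fintype.card (Sym2 ι) := by
  have hn : (0 : ℝ) < 4 * Fintype.card ι := by
    have : (0 : ℝ) < Fintype.card ι := by exact_mod_cast hι
    positivity
  set h : (Sym2 κ → ℝ) → ENNReal := fun a => (psd κ).indicator
    (fun a => ENNReal.ofReal (Real.exp (-tr a))) ((4 * Fintype.card ι : ℝ)⁻¹ • a) with hh
  have hm : Measurable h := (measurable_indicator_psd κ).comp (measurable_const_smul _)
  rw [expInt, lintegral_curry]
  refine (lintegral_mono fun B => expInt_posC_le_aux B hι).trans ?_
  have hsh := lintegral_shear (fun p : Sym2 ι => p.IsDiag) diagShift measurable_diagShift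
    (fun B B' hBB => funext fun p => ?_) (fun B p hp => if_pos hp)
    (f := fun B => ∏ p, h (B p))
    (Finset.measurable_prod _ fun p _ => hm.comp (measurable_pi_apply p)) (E := Sym2 κ → ℝ)
  · refine hsh.le.trans ?_
    rw [lintegral_pi_prod _ fun _ => hm, Finset.prod_const, Finset.card_univ, hh,
      lintegral_comp_smul hn (measurable_indicator_psd κ), mul_pow, ← ENNReal.ofReal_pow (by positivity),
      ← pow_mul, Fintype.card_prod, mul_comm (Fintype.card (Sym2 ι))]
    rfl
  · unfold diagShift
    split_ifs with hp
    · rfl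
    · induction p with
      | _ i j => simp [hBB]

lemma expInt_posC_swap : expInt (posC ι κ) (btr ι κ) = expInt (posC κ ι) (btr κ ι) := by
  unfold expInt
  rw [lintegral_reindex (Equiv.prodComm (Sym2 κ) (Sym2 ι))]
  refine lintegral_congr fun b => ?_
  have hb (x : ι → ℝ) (y : κ → ℝ) : bq (b ∘ (Equiv.prodComm (Sym2 κ) (Sym2 ι)).symm) x y =
      bq b y x := by
    unfold bq
    rw [← (Equiv.prodComm (Sym2 κ) (Sym2 ι)).sum_comp]
    exact Finset.sum_congr rfl fun p _ => by
      show b p * (mon x p.2 * mon y p.1) = b p * (mon y p.1 * mon x p.2)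
      ring
  have h1 : b ∘ (Equiv.prodComm (Sym2 κ) (Sym2 ι)).symm ∈ posC ι κ ↔ b ∈ posC κ ι :=
    ⟨fun h y x => hb x y ▸ h x y, fun h x y => by rw [hb]; exact h y x⟩
  have h2 : btr ι κ (b ∘ (Equiv.prodComm (Sym2 κ) (Sym2 ι)).symm) = btr κ ι b := by
    simp only [btr_apply]
    rw [Finset.sum_comm]
    rfl
  by_cases h : b ∈ posC κ ι
  · rw [Set.indicator_of_mem h, Set.indicator_of_mem (h1.2 h), h2]
  · rw [Set.indicator_of_notMem h, Set.indicator_of_notMem (fun h' => h (h1.1 h'))]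

end PosBound

section SqBound

variable {ι κ : Type} [Fintype ι] [DecidableEq ι] [Fintype κ] [DecidableEq κ]

/-- The unordered pairs which are not in the range of `lft`. -/
abbrev Rest (ι κ : Type) [Fintype ι] [DecidableEq ι] [Fintype κ] [DecidableEq κ] : Type :=
  {r : Sym2 (ι × κ) // lft (comp r) ≠ r}

lemma comp_fiber {a b c : Sym2 (ι × κ)} (h : comp a = comp b) (h' : comp a = comp c) :
    a = b ∨ a = c ∨ b = c := by
  induction a with | _ a₁ a₂ =>
  induction b with | _ b₁ b₂ =>
  induction c with | _ c₁ c₂ =>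
  obtain ⟨i₁, k₁⟩ := a₁
  obtain ⟨i₂, k₂⟩ := a₂
  obtain ⟨j₁, l₁⟩ := b₁
  obtain ⟨j₂, l₂⟩ := b₂
  obtain ⟨p₁, q₁⟩ := c₁
  obtain ⟨p₂, q₂⟩ := c₂
  simp only [comp_mk, Prod.mk.injEq, Sym2.eq_iff] at h h' ⊢
  grind

lemma comp_rest_injective : Function.Injective fun r : Rest ι κ => comp r.1 := by
  intro r t h
  have h : comp r.1 = comp t.1 := h
  rcases comp_fiber (a := lft (comp r.1)) (b := r.1) (c := t.1) (comp_lft _)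
    ((comp_lft _).trans h) with h' | h' | h'
  · exact absurd h' r.2
  · rw [h] at h'; exact absurd h' t.2
  · exact Subtype.ext h'

/-- The splitting of the unordered pairs into the range of `lft` and the rest. -/
def lftEquiv (ι κ : Type) [Fintype ι] [DecidableEq ι] [Fintype κ] [DecidableEq κ] :
    (Sym2 ι × Sym2 κ) ⊕ Rest ι κ ≃ Sym2 (ι × κ) :=
  Equiv.ofBijective (Sum.elim lft Subtype.val) <| by
    constructor
    · rintro (s | r) (s' | r') h
      · exact congrArg _ (lft_injective h)
      · exact absurd (by rw [← show lft s = r'.1 from h, comp_lft]) r'.2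
      · exact absurd (by rw [show r.1 = lft s' from h, comp_lft]) r.2
      · exact congrArg _ (Subtype.ext h)
    · intro r
      by_cases h : lft (comp r) = r
      · exact ⟨Sum.inl _, h⟩
      · exact ⟨Sum.inr ⟨r, h⟩, rfl⟩

lemma lftEquiv_inl (s : Sym2 ι × Sym2 κ) : lftEquiv ι κ (Sum.inl s) = lft s := rfl

lemma lftEquiv_inr (r : Rest ι κ) : lftEquiv ι κ (Sum.inr r) = r.1 := rfl

lemma biquadFamily_rest :
    BiquadFamily 2 fun (r : Rest ι κ) (u : ι × κ → ℝ) (y : Unit → ℝ) =>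
      (mon u r.1 - mon u (lft (comp r.1))) * y () ^ 2 where
  cont p := (((continuous_mon _).sub (continuous_mon _)).comp continuous_fst).mul (by fun_prop)
  par_left p x v y := by
    linear_combination y () ^ 2 * (mon_parallelogram x v p.1 -
      mon_parallelogram x v (lft (comp p.1)))
  par_right p x y w := by simp only [Pi.add_apply, Pi.sub_apply]; ring
  smul_left p t x y := by simp only [mon_smul]; ring
  smul_right p t x y := by simp only [Pi.smul_apply, smul_eq_mul]; ring
  bound u y := by
    have e : nsq y = y () ^ 2 := by simp [nsq]
    have h1 : ∑ r : Rest ι κ, mon u (lft (comp r.1)) ^ 2 ≤ ∑ s, mon u (lft s) ^ 2 := by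
      rw [← Finset.sum_image (s := Finset.univ) (g := fun r : Rest ι κ => comp r.1)
        (f := fun s => mon u (lft s) ^ 2) fun a _ b _ h => comp_rest_injective h]
      exact Finset.sum_le_univ_sum_of_nonneg fun r => sq_nonneg _
    have h2 : ∑ s, mon u (lft s) ^ 2 + ∑ r : Rest ι κ, mon u r.1 ^ 2 ≤ nsq u ^ 2 := by
      refine le_trans (le_of_eq ?_) (sum_mon_sq_le u)
      rw [← (lftEquiv ι κ).sum_comp, Fintype.sum_sum_type]
      rfl
    have h3 : ∑ r : Rest ι κ, (mon u r.1 - mon u (lft (comp r.1))) ^ 2 ≤ 2 * nsq u ^ 2 := by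
      calc ∑ r : Rest ι κ, (mon u r.1 - mon u (lft (comp r.1))) ^ 2
          ≤ ∑ r : Rest ι κ, (2 * mon u r.1 ^ 2 + 2 * mon u (lft (comp r.1)) ^ 2) :=
            Finset.sum_le_sum fun r _ => by
              nlinarith [sq_nonneg (mon u r.1 + mon u (lft (comp r.1)))]
        _ ≤ 2 * nsq u ^ 2 := by
            rw [Finset.sum_add_distrib, ← Finset.mul_sum, ← Finset.mul_sum]
            linarith
    simp only [mul_pow, ← Finset.sum_mul, e]
    calc _ ≤ (2 * nsq u ^ 2) * (y () ^ 2) ^ 2 := by gcongr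
      _ = _ := by ring

/-- The quadratic form with restriction `b` to rank one tensors and prescribed coefficients `c`
outside of the range of `lft`. -/
def extForm (b : Sym2 ι × Sym2 κ → ℝ) (c : Rest ι κ → ℝ) : Sym2 (ι × κ) → ℝ :=
  Sum.elim (b - fun s => ∑ r with comp r.1 = s, c r) c ∘ (lftEquiv ι κ).symm

lemma extForm_lft (b : Sym2 ι × Sym2 κ → ℝ) (c : Rest ι κ → ℝ) (s : Sym2 ι × Sym2 κ) :
    extForm b c (lft s) = b s - ∑ r with comp r.1 = s, c r := by
  simp [extForm, ← lftEquiv_inl]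

lemma extForm_rest (b : Sym2 ι × Sym2 κ → ℝ) (c : Rest ι κ → ℝ) (r : Rest ι κ) :
    extForm b c r.1 = c r := by
  simp [extForm, ← lftEquiv_inr]

lemma ext_lft_rest {a a' : Sym2 (ι × κ) → ℝ} (h : ∀ s, a (lft s) = a' (lft s))
    (h' : ∀ r : Rest ι κ, a r.1 = a' r.1) : a = a' := by
  funext r
  by_cases hr : lft (comp r) = r
  · rw [← hr]; exact h _
  · exact h' ⟨r, hr⟩

lemma extForm_add (b b' : Sym2 ι × Sym2 κ → ℝ) (c c' : Rest ι κ → ℝ) :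
    extForm (b + b') (c + c') = extForm b c + extForm b' c' :=
  ext_lft_rest
    (fun s => by
      simp only [extForm_lft, Pi.add_apply, Finset.sum_add_distrib]; ring)
    fun r => by simp only [extForm_rest, Pi.add_apply]

lemma extForm_smul (t : ℝ) (b : Sym2 ι × Sym2 κ → ℝ) (c : Rest ι κ → ℝ) :
    extForm (t • b) (t • c) = t • extForm b c :=
  ext_lft_rest
    (fun s => by
      simp only [extForm_lft, Pi.smul_apply, smul_eq_mul, ← Finset.mul_sum]; ring)
    fun r => by simp only [extForm_rest, Pi.smul_apply]

lemma sum_lft_rest (g : Sym2 (ι × κ) → ℝ) :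
    ∑ r, g r = ∑ s, g (lft s) + ∑ r : Rest ι κ, g r.1 := by
  rw [← (lftEquiv ι κ).sum_comp, Fintype.sum_sum_type]
  rfl

lemma restr_eq (a : Sym2 (ι × κ) → ℝ) (s : Sym2 ι × Sym2 κ) :
    restr ι κ a s = a (lft s) + ∑ r : Rest ι κ with comp r.1 = s, a r.1 := by
  rw [restr_apply, Finset.sum_filter, sum_lft_rest, Finset.sum_filter]
  simp [comp_lft]

lemma extForm_restr (a : Sym2 (ι × κ) → ℝ) : extForm (restr ι κ a) (fun r => a r.1) = a :=
  ext_lft_rest (fun s => by rw [extForm_lft, restr_eq]; ring) fun r => extForm_rest _ _ r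

lemma restr_extForm (b : Sym2 ι × Sym2 κ → ℝ) (c : Rest ι κ → ℝ) :
    restr ι κ (extForm b c) = b := by
  funext s
  simp only [restr_eq, extForm_lft, extForm_rest]; ring

lemma tr_extForm (b : Sym2 ι × Sym2 κ → ℝ) (c : Rest ι κ → ℝ) :
    tr (extForm b c) = btr ι κ b := by
  rw [← btr_restr, restr_extForm]

lemma qf_extForm_zero (c : Rest ι κ → ℝ) (u : ι × κ → ℝ) :
    qf (extForm 0 c) u = ∑ r, c r * (mon u r.1 - mon u (lft (comp r.1))) := by
  simp only [qf, sum_lft_rest, extForm_lft, extForm_rest, Pi.zero_apply, zero_sub, neg_mul,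
    Finset.sum_neg_distrib, mul_sub, Finset.sum_sub_distrib]
  have : ∑ s, (∑ r : Rest ι κ with comp r.1 = s, c r) * mon u (lft s) =
      ∑ r : Rest ι κ, c r * mon u (lft (comp r.1)) := by
    rw [← Finset.sum_fiberwise (s := Finset.univ) (g := fun r : Rest ι κ => comp r.1)]
    refine Finset.sum_congr rfl fun s _ => ?_
    rw [Finset.sum_mul]
    refine Finset.sum_congr rfl fun r hr => ?_
    rw [(Finset.mem_filter.1 hr).2]
  rw [this]; ring

lemma measurable_extForm :
    Measurable fun p : (Sym2 ι × Sym2 κ → ℝ) × (Rest ι κ → ℝ) => extForm p.1 p.2 := by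
  refine measurable_pi_lambda _ fun r => ?_
  unfold extForm
  rcases h : (lftEquiv ι κ).symm r with s | r <;>
    simp only [Function.comp_apply, h, Sum.elim_inl, Sum.elim_inr, Pi.sub_apply] <;> fun_prop

lemma lintegral_extForm {f : (Sym2 (ι × κ) → ℝ) → ENNReal} (hf : Measurable f) :
    ∫⁻ a, f a = ∫⁻ b : Sym2 ι × Sym2 κ → ℝ, ∫⁻ c : Rest ι κ → ℝ, f (extForm b c) := by
  have hm := hf.comp (measurable_extForm (ι := ι) (κ := κ))
  have hm' : Measurable fun p : (Sym2 ι × Sym2 κ → ℝ) × (Rest ι κ → ℝ) =>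
      f (Sum.elim p.1 p.2 ∘ (lftEquiv ι κ).symm) := by
    refine hf.comp (measurable_pi_lambda _ fun r => ?_)
    rcases h : (lftEquiv ι κ).symm r with s | r <;>
      simp only [Function.comp_apply, h, Sum.elim_inl, Sum.elim_inr] <;> fun_prop
  rw [lintegral_reindex (lftEquiv ι κ), lintegral_sumElim, Measure.volume_eq_prod,
    lintegral_prod_symm _ hm'.aemeasurable, lintegral_lintegral_swap (f := fun b c => f (extForm b c)) hm.aemeasurable]
  refine lintegral_congr fun c => ?_
  exact (lintegral_sub_right_eq_self
    (fun b : Sym2 ι × Sym2 κ → ℝ => f (Sum.elim b c ∘ (lftEquiv ι κ).symm)) _).symm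

/-- Comparison of the exponential integral over the sums of squares with the one over the
positive semidefinite matrices. -/
lemma expInt_sqC_le {N k : ℕ} (hN : Fintype.card ι * Fintype.card κ = N) (hN4 : 4 ≤ N)
    (hk : Fintype.card (Rest ι κ) = k) {t : ℝ} (ht : 0 < t) :
    expInt (sqC ι κ) (btr ι κ) *
        ENNReal.ofReal (Real.exp (-(t * N)) *
          (t ^ k * (1 / 2 * √(Real.pi / (16 * (N + 1 : ℕ) * 2)) ^ k))) ≤
      expInt (psd (ι × κ)) tr := by
  subst hk
  let φ := fun (r : Rest ι κ) (u : ι × κ → ℝ) (y : Unit → ℝ) =>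
    (mon u r.1 - mon u (lft (comp r.1))) * y () ^ 2
  have hvol : ENNReal.ofReal (1 / 2 * √(Real.pi / (16 * (N + 1 : ℕ) * 2)) ^
      Fintype.card (Rest ι κ)) ≤ volume (unitBody φ) :=
    volume_unitBody_ge biquadFamily_rest two_pos (by simp [hN]) (by omega)
  have hq : btr ι κ (qC ι κ) = N := by rw [btr_qC, ← hN]; push_cast; ring
  have hF := measurable_indicator_psd (ι × κ)
  have hkey (b : Sym2 ι × Sym2 κ → ℝ) :
      (sqC ι κ).indicator (fun b => ENNReal.ofReal (Real.exp (-btr ι κ b))) b *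
        ENNReal.ofReal (Real.exp (-(t * N)) * (t ^ Fintype.card (Rest ι κ) *
          (1 / 2 * √(Real.pi / (16 * (N + 1 : ℕ) * 2)) ^ Fintype.card (Rest ι κ)))) ≤
      ∫⁻ c : Rest ι κ → ℝ, (psd (ι × κ)).indicator (fun a => ENNReal.ofReal (Real.exp (-tr a)))
        (extForm (b + t • qC ι κ) c) := by
    by_cases hb : b ∈ sqC ι κ
    swap
    · rw [Set.indicator_of_notMem hb, zero_mul]; exact zero_le
    obtain ⟨a, ha, rfl⟩ := hb
    rw [Set.indicator_of_mem (show restr ι κ a ∈ sqC ι κ from ⟨a, ha, rfl⟩)]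
    set o : Rest ι κ → ℝ := (fun r => a r.1) + t • fun r => one (ι × κ) r.1
    have hA : MeasurableSet ((fun c : Rest ι κ → ℝ => t⁻¹ • c) ⁻¹' unitBody φ) :=
      (measurable_const_smul t⁻¹) isClosed_unitBody.measurableSet
    calc _ ≤ ENNReal.ofReal (Real.exp (-(btr ι κ (restr ι κ a) + t * N))) *
          volume ((fun c : Rest ι κ → ℝ => t⁻¹ • c) ⁻¹' unitBody φ) := by
          rw [Measure.addHaar_preimage_smul _ (inv_ne_zero ht.ne'),
            Module.finrank_fintype_fun_eq_card, inv_pow, inv_inv, abs_of_pos (by positivity),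
            neg_add, Real.exp_add, ENNReal.ofReal_mul (Real.exp_pos _).le,
            ENNReal.ofReal_mul (Real.exp_pos _).le, ENNReal.ofReal_mul (by positivity)]
          exact (mul_assoc _ _ _).symm.le.trans (mul_le_mul' le_rfl (mul_le_mul' le_rfl hvol))
      _ = ∫⁻ c : Rest ι κ → ℝ, ((fun c : Rest ι κ → ℝ => t⁻¹ • c) ⁻¹' unitBody φ).indicator
          (fun _ => ENNReal.ofReal (Real.exp (-(btr ι κ (restr ι κ a) + t * N)))) c :=
          (lintegral_indicator_const hA _).symm
      _ ≤ ∫⁻ c : Rest ι κ → ℝ, (psd (ι × κ)).indicator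
          (fun a => ENNReal.ofReal (Real.exp (-tr a)))
          (extForm (restr ι κ a + t • qC ι κ) (o + c)) := by
          refine lintegral_mono fun c => ?_
          by_cases hc : c ∈ (fun c : Rest ι κ → ℝ => t⁻¹ • c) ⁻¹' unitBody φ
          swap
          · rw [Set.indicator_of_notMem hc]; exact zero_le
          have e : extForm (restr ι κ a + t • qC ι κ) (o + c) =
              a + t • (one (ι × κ) + extForm 0 (t⁻¹ • c)) := by
            rw [← add_zero (restr ι κ a + t • qC ι κ), extForm_add, extForm_add, extForm_smul,
              extForm_restr, qC, extForm_restr, smul_add, ← extForm_smul, smul_zero,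
              smul_inv_smul₀ ht.ne', add_assoc]
          have hpsd : extForm (restr ι κ a + t • qC ι κ) (o + c) ∈ psd (ι × κ) := by
            rw [e]
            refine add_mem_psd ha (smul_mem_psd ht.le fun u => ?_)
            have := (abs_le.1 (hc u 1)).1
            rw [qf_add, qf_one, qf_extForm_zero]
            simp [comb, nsq, φ] at this
            simp only [nsq, Pi.smul_apply, smul_eq_mul]
            linarith
          rw [Set.indicator_of_mem hc, Set.indicator_of_mem hpsd, tr_extForm, map_add, map_smul,
            hq, smul_eq_mul]
      _ = _ := lintegral_add_left_eq_self (fun c => (psd (ι × κ)).indicator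
          (fun a => ENNReal.ofReal (Real.exp (-tr a)))
          (extForm (restr ι κ a + t • qC ι κ) c)) o
  rw [expInt, ← lintegral_mul_const' _ _ ENNReal.ofReal_ne_top]
  refine (lintegral_mono hkey).trans (le_of_eq ?_)
  rw [lintegral_add_right_eq_self (fun b => ∫⁻ c : Rest ι κ → ℝ, (psd (ι × κ)).indicator
    (fun a => ENNReal.ofReal (Real.exp (-tr a))) (extForm b c)), expInt, lintegral_extForm hF]

end SqBound

section Slice

variable {S : Type} [Fintype S]

/-- The cone coordinates `(s, a) ↦ s q + χ a`. -/
def coneMap {D : ℕ} (q : S → ℝ) (χ : (Fin D → ℝ) →ₗ[ℝ] (S → ℝ)) :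
    (ℝ × (Fin D → ℝ)) →ₗ[ℝ] (S → ℝ) :=
  (LinearMap.toSpanSingleton ℝ _ q).coprod χ

lemma coneMap_apply {D : ℕ} (q : S → ℝ) (χ : (Fin D → ℝ) →ₗ[ℝ] (S → ℝ)) (s : ℝ)
    (a : Fin D → ℝ) : coneMap q χ (s, a) = s • q + χ a := by
  simp [coneMap]

lemma lintegral_exp_mul_pow {N : ℝ} (hN : 0 < N) (D : ℕ) :
    ∫⁻ s in Set.Ioi (0 : ℝ), ENNReal.ofReal (Real.exp (-(s * N)) * s ^ D) ≠ 0 ∧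
      ∫⁻ s in Set.Ioi (0 : ℝ), ENNReal.ofReal (Real.exp (-(s * N)) * s ^ D) ≠ ⊤ := by
  have hm : Measurable fun s : ℝ => ENNReal.ofReal (Real.exp (-(s * N)) * s ^ D) := by fun_prop
  constructor
  · intro h
    rw [lintegral_eq_zero_iff hm, Filter.EventuallyEq, ae_restrict_iff' measurableSet_Ioi] at h
    have : volume (Set.Ioi (0 : ℝ)) = 0 := by
      refine measure_mono_null (fun s hs => ?_) h
      have hs' : (0 : ℝ) < s := hs
      simp only [Set.mem_compl_iff, Set.mem_ofPred_eq, Pi.zero_apply, ENNReal.ofReal_eq_zero,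
        not_forall]
      exact ⟨hs, by push Not; positivity⟩
    simp at this
  · have := integrableOn_rpow_mul_exp_neg_mul_rpow (p := 1) (s := D) (b := N)
      (by have : (0 : ℝ) ≤ D := D.cast_nonneg
          linarith) one_pos hN
    refine ne_top_of_le_ne_top this.lintegral_lt_top.ne (lintegral_mono_ae ?_)
    filter_upwards with s
    rw [Real.rpow_one, Real.rpow_natCast]
    exact ENNReal.ofReal_le_ofReal (by rw [mul_comm, neg_mul, mul_comm N])

lemma exists_expInt_eq_mul_volume {D : ℕ} (hS : Fintype.card S = D + 1) (ℓ : (S → ℝ) →ₗ[ℝ] ℝ)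
    (q : S → ℝ) (hq : 0 < ℓ q) (χ : (Fin D → ℝ) →ₗ[ℝ] (S → ℝ)) (hχ : Function.Injective χ)
    (hℓ : ∀ a, ℓ (χ a) = 0) :
    ∃ γ : ENNReal, γ ≠ 0 ∧ γ ≠ ⊤ ∧ ∀ K : Set (S → ℝ), Convex ℝ K →
      (∀ t : ℝ, 0 < t → ∀ b ∈ K, t • b ∈ K) → (∀ b ∈ K, 0 ≤ ℓ b) →
      expInt K ℓ = γ * volume {a | χ a + q ∈ K} := by
  have hinj : Function.Injective (coneMap q χ) := by
    rw [injective_iff_map_eq_zero]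
    rintro ⟨s, a⟩ h
    rw [coneMap_apply] at h
    have h1 := congrArg ℓ h
    rw [map_add, map_smul, hℓ, add_zero, smul_eq_mul, map_zero] at h1
    have hs : s = 0 := (mul_eq_zero.1 h1).resolve_right hq.ne'
    subst hs
    rw [zero_smul, zero_add] at h
    rw [(map_eq_zero_iff χ hχ).1 h]; rfl
  let e := (LinearEquiv.ofInjectiveOfFinrankEq (coneMap q χ) hinj
    (by simp [hS, add_comm])).toContinuousLinearEquiv
  have he (s : ℝ) (a : Fin D → ℝ) : e (s, a) = s • q + χ a := coneMap_apply q χ s a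
  have : (volume : Measure (ℝ × (Fin D → ℝ))).IsAddHaarMeasure := by
    rw [Measure.volume_eq_prod]; infer_instance
  have : (Measure.map e.symm (volume : Measure (S → ℝ))).IsAddHaarMeasure :=
    e.symm.isAddHaarMeasure_map _
  let κ := (Measure.map e.symm (volume : Measure (S → ℝ))).addHaarScalarFactor
    (volume : Measure (ℝ × (Fin D → ℝ)))
  have hκ : Measure.map e.symm (volume : Measure (S → ℝ)) = κ • volume :=
    Measure.isAddLeftInvariant_eq_smul _ _
  have hκ0 : 0 < κ := Measure.addHaarScalarFactor_pos_of_isAddHaarMeasure _ _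
  obtain ⟨h0, htop⟩ := lintegral_exp_mul_pow hq D
  refine ⟨κ * ∫⁻ s in Set.Ioi (0 : ℝ), ENNReal.ofReal (Real.exp (-(s * ℓ q)) * s ^ D),
    mul_ne_zero (by exact_mod_cast hκ0.ne') h0, ENNReal.mul_ne_top ENNReal.coe_ne_top htop,
    fun K hK hcone hpos => ?_⟩
  have hpre : Convex ℝ (e ⁻¹' K) := hK.linear_preimage (e : (ℝ × (Fin D → ℝ)) →ₗ[ℝ] (S → ℝ))
  have hfubini : expInt K ℓ = κ * ∫⁻ p : ℝ × (Fin D → ℝ),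
      (e ⁻¹' K).indicator (fun p => ENNReal.ofReal (Real.exp (-(p.1 * ℓ q)))) p := by
    have h1 := lintegral_map_equiv (μ := (volume : Measure (S → ℝ)))
      (fun p => (e ⁻¹' K).indicator (fun p => ENNReal.ofReal (Real.exp (-(p.1 * ℓ q)))) p)
      e.symm.toHomeomorph.toMeasurableEquiv
    rw [show (⇑e.symm.toHomeomorph.toMeasurableEquiv : (S → ℝ) → _) = ⇑e.symm from rfl, hκ,
      lintegral_smul_measure] at h1
    rw [ENNReal.smul_def, smul_eq_mul] at h1
    rw [h1]
    refine lintegral_congr fun b => ?_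
    obtain ⟨⟨s, a⟩, rfl⟩ := e.surjective b
    rw [e.symm_apply_apply]
    by_cases hb : e (s, a) ∈ K
    · rw [Set.indicator_of_mem hb, Set.indicator_of_mem (show (s, a) ∈ e ⁻¹' K from hb), he,
        map_add, map_smul, hℓ, add_zero, smul_eq_mul]
    · rw [Set.indicator_of_notMem hb, Set.indicator_of_notMem (show (s, a) ∉ e ⁻¹' K from hb)]
  have hae : AEMeasurable ((e ⁻¹' K).indicator fun p : ℝ × (Fin D → ℝ) =>
      ENNReal.ofReal (Real.exp (-(p.1 * ℓ q)))) (volume : Measure (ℝ × (Fin D → ℝ))) := by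
    refine AEMeasurable.indicator₀ (Measurable.aemeasurable ?_) (hpre.nullMeasurableSet _)
    fun_prop
  rw [hfubini, mul_assoc]
  congr 1
  rw [Measure.volume_eq_prod] at hae ⊢
  rw [lintegral_prod _ hae, ← lintegral_mul_const _ (by fun_prop),
    ← lintegral_indicator measurableSet_Ioi]
  refine lintegral_congr_ae ?_
  have hne : ∀ᵐ s : ℝ, s ≠ 0 := by
    rw [ae_iff]; simp
  filter_upwards [hne] with s hs
  rcases hs.lt_or_gt with hs | hs
  · rw [Set.indicator_of_notMem (by simpa using hs.le)]
    rw [← lintegral_zero (μ := (volume : Measure (Fin D → ℝ)))]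
    refine lintegral_congr fun a => Set.indicator_of_notMem (fun h => ?_) _
    have := hpos _ h
    rw [he, map_add, map_smul, hℓ, add_zero, smul_eq_mul] at this
    nlinarith
  · rw [Set.indicator_of_mem (show s ∈ Set.Ioi (0 : ℝ) from hs)]
    have hset : ∀ a : Fin D → ℝ, (s, a) ∈ e ⁻¹' K ↔ a ∈ (fun a => s⁻¹ • a) ⁻¹'
        {a | χ a + q ∈ K} := by
      intro a
      show e (s, a) ∈ K ↔ χ (s⁻¹ • a) + q ∈ K
      rw [he, map_smul]
      constructor
      · intro h
        have := hcone s⁻¹ (inv_pos.2 hs) _ h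
        rwa [smul_add, inv_smul_smul₀ hs.ne', add_comm] at this
      · intro h
        have := hcone s hs _ h
        rwa [smul_add, smul_inv_smul₀ hs.ne', add_comm] at this
    have hcv : Convex ℝ ((fun a : Fin D → ℝ => s⁻¹ • a) ⁻¹' {a | χ a + q ∈ K}) := by
      have h1 : Convex ℝ {a | χ a + q ∈ K} :=
        (hK.translate_preimage_left q).linear_preimage χ
      exact h1.linear_preimage (s⁻¹ • LinearMap.id)
    have hfun : (fun a : Fin D → ℝ => (e ⁻¹' K).indicator
        (fun p : ℝ × (Fin D → ℝ) => ENNReal.ofReal (Real.exp (-(p.1 * ℓ q)))) (s, a)) =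
        ((fun a => s⁻¹ • a) ⁻¹' {a | χ a + q ∈ K}).indicator
          fun _ => ENNReal.ofReal (Real.exp (-(s * ℓ q))) := by
      funext a
      by_cases h : (s, a) ∈ e ⁻¹' K
      · rw [Set.indicator_of_mem h, Set.indicator_of_mem ((hset a).1 h)]
      · rw [Set.indicator_of_notMem h, Set.indicator_of_notMem fun h' => h ((hset a).2 h')]
    rw [hfun, lintegral_indicator_const₀ (hcv.nullMeasurableSet _),
      Measure.addHaar_preimage_smul _ (inv_ne_zero hs.ne'), Module.finrank_fintype_fun_eq_card,
      inv_pow, inv_inv, abs_of_pos (by positivity), Fintype.card_fin, ← mul_assoc,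
      ENNReal.ofReal_mul (Real.exp_pos _).le]

end Slice

open BiformPaper

section Coefficients

variable {ι κ : Type} [Fintype ι] [DecidableEq ι] [Fintype κ] [DecidableEq κ]

lemma eq_zero_of_qf_eq_zero {a : Sym2 ι → ℝ} (h : ∀ u, qf a u = 0) : a = 0 := by
  have hd (i : ι) : a s(i, i) = 0 := (qf_single a i).symm.trans (h _)
  funext p
  induction p with
  | _ i j =>
    by_cases hij : i = j
    · subst hij; exact hd i
    · have := h (Pi.single i 1 + Pi.single j 1)
      simp only [qf, mon_single_add_single hij, mul_add, mul_ite, mul_one, mul_zero,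
        Finset.sum_add_distrib, Finset.sum_ite_eq', Finset.mem_univ, if_true, hd, zero_add] at this
      exact this

lemma eq_zero_of_bq_eq_zero {b : Sym2 ι × Sym2 κ → ℝ} (h : ∀ x y, bq b x y = 0) : b = 0 := by
  have h1 (x : ι → ℝ) : slice (fun p r => b (p, r)) x = 0 :=
    eq_zero_of_qf_eq_zero fun y => by rw [qf_slice]; exact h x y
  funext ⟨p, r⟩
  have h2 : (fun p => b (p, r)) = 0 := eq_zero_of_qf_eq_zero fun x => by
    have := congrFun (h1 x) r
    simp only [slice, Finset.sum_apply, Pi.smul_apply, smul_eq_mul, Pi.zero_apply] at this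
    rw [qf, ← this]
    exact Finset.sum_congr rfl fun p _ => mul_comm _ _
  exact congrFun h2 p

lemma bq_injective {b b' : Sym2 ι × Sym2 κ → ℝ} (h : ∀ x y, bq b x y = bq b' x y) : b = b' := by
  rw [← sub_eq_zero]
  refine eq_zero_of_bq_eq_zero fun x y => ?_
  rw [sub_eq_add_neg, ← neg_one_smul ℝ b', bq_add, bq_smul, h]; ring

lemma exists_qf_eq_sum_sq {a : Sym2 ι → ℝ} (ha : a ∈ psd ι) :
    ∃ (N : ℕ) (w : Fin N → ι → ℝ), ∀ u, qf a u = ∑ i, (∑ j, w i j * u j) ^ 2 := by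
  let M : Matrix ι ι ℝ := Matrix.of fun i j => a s(i, j) / mult s(i, j)
  have hM (u : ι → ℝ) : u ⬝ᵥ M.mulVec u = qf a u := by
    simp only [dotProduct, Matrix.mulVec, M, Matrix.of_apply, Finset.mul_sum, qf]
    rw [Finset.sum_congr rfl fun i _ => Finset.sum_congr rfl fun j _ =>
      show u i * (a s(i, j) / mult s(i, j) * u j) =
        (fun p => a p / mult p * mon u p) s(i, j) by simp only [mon_mk]; ring,
      sum_sym2 fun p => a p / mult p * mon u p]
    refine Finset.sum_congr rfl fun p _ => ?_
    have := (mult_pos p).ne'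
    field_simp
  have hpsd : M.PosSemidef := by
    refine Matrix.PosSemidef.of_dotProduct_mulVec_nonneg ?_ fun u => ?_
    · ext i j
      simp [M, Sym2.eq_swap (a := i)]
    · rw [star_trivial, hM]; exact ha u
  obtain ⟨N, w, hw⟩ := Matrix.posSemidef_iff_eq_sum_vecMulVec.1 hpsd
  refine ⟨N, w, fun u => ?_⟩
  rw [← hM, hw, Matrix.sum_mulVec, dotProduct_sum]
  refine Finset.sum_congr rfl fun i _ => ?_
  rw [Matrix.vecMulVec_mulVec, star_trivial]
  simp [dotProduct, sq, Finset.sum_mul, Finset.mul_sum]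
  exact Finset.sum_congr rfl fun j _ => Finset.sum_congr rfl fun k _ => by ring

lemma bq_restr_nonneg {b : Sym2 ι × Sym2 κ → ℝ} (hb : b ∈ sqC ι κ) : b ∈ posC ι κ := by
  obtain ⟨a, ha, rfl⟩ := hb
  exact fun x y => by rw [bq_restr]; exact ha _

lemma btr_nonneg {b : Sym2 ι × Sym2 κ → ℝ} (hb : b ∈ posC ι κ) : 0 ≤ btr ι κ b := by
  simp only [btr_apply, ← bq_single]
  exact Finset.sum_nonneg fun i _ => Finset.sum_nonneg fun k _ => hb _ _

lemma convex_posC : Convex ℝ (posC ι κ) := fun b hb b' hb' s t hs ht _ x y => by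
  rw [bq_add, bq_smul, bq_smul]
  exact add_nonneg (mul_nonneg hs (hb x y)) (mul_nonneg ht (hb' x y))

lemma convex_sqC : Convex ℝ (sqC ι κ) := by
  have : Convex ℝ (psd (ι × κ)) := fun a ha a' ha' s t hs ht _ =>
    add_mem_psd (smul_mem_psd hs ha) (smul_mem_psd ht ha')
  exact this.linear_image (restr ι κ)

end Coefficients

section Polynomials

variable {n m : ℕ}

/-- The monomials of bidegree `(2, 2)`. -/
def polyMon (p : Sym2 (Fin n) × Sym2 (Fin m)) : MvPolynomial (Fin n ⊕ Fin m) ℝ :=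
  (p.1.map fun i => X (Sum.inl i)).mul * (p.2.map fun j => X (Sum.inr j)).mul

/-- The biform of bidegree `(2, 2)` with given coefficients. -/
def poly (n m : ℕ) :
    (Sym2 (Fin n) × Sym2 (Fin m) → ℝ) →ₗ[ℝ] MvPolynomial (Fin n ⊕ Fin m) ℝ :=
  Fintype.linearCombination ℝ polyMon

lemma poly_apply (b : Sym2 (Fin n) × Sym2 (Fin m) → ℝ) : poly n m b = ∑ p, b p • polyMon p := rfl

/-- The biform of bidegree `(1, 1)` with given coefficients. -/
def polyLin (n m : ℕ) : (Fin n × Fin m → ℝ) →ₗ[ℝ] MvPolynomial (Fin n ⊕ Fin m) ℝ :=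
  Fintype.linearCombination ℝ fun p => X (Sum.inl p.1) * X (Sum.inr p.2)

lemma beval_polyMon (p : Sym2 (Fin n) × Sym2 (Fin m)) (x : Fin n → ℝ) (y : Fin m → ℝ) :
    beval (polyMon p) x y = mon x p.1 * mon y p.2 := by
  obtain ⟨p, q⟩ := p
  induction p with | _ i j =>
  induction q with | _ k l => simp [polyMon, beval]

lemma beval_poly (b : Sym2 (Fin n) × Sym2 (Fin m) → ℝ) (x : Fin n → ℝ) (y : Fin m → ℝ) :
    beval (poly n m b) x y = bq b x y := by
  simp only [poly_apply, bq, ← beval_polyMon]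
  simp [beval, smul_eval]

lemma beval_polyLin (w : Fin n × Fin m → ℝ) (x : Fin n → ℝ) (y : Fin m → ℝ) :
    beval (polyLin n m w) x y = ∑ p, w p * tens x y p := by
  simp [polyLin, Fintype.linearCombination_apply, beval, smul_eval, tens]

lemma funext_beval {f g : MvPolynomial (Fin n ⊕ Fin m) ℝ}
    (h : ∀ x y, beval f x y = beval g x y) : f = g :=
  MvPolynomial.funext fun z => by
    have := h (z ∘ Sum.inl) (z ∘ Sum.inr)
    rwa [beval, beval, Sum.elim_comp_inl_inr] at this

lemma poly_injective : Function.Injective (poly n m) := fun b b' h =>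
  bq_injective fun x y => by rw [← beval_poly, h, beval_poly]

lemma polyMon_mem_biform (p : Sym2 (Fin n) × Sym2 (Fin m)) : polyMon p ∈ Biform n m 2 2 := by
  obtain ⟨p, q⟩ := p
  induction p with | _ i j =>
  induction q with | _ k l =>
  simp only [polyMon, Sym2.map_mk, Sym2.mul_mk, Biform]
  exact (((isWeightedHomogeneous_X ℝ (bw n m) (Sum.inl i)).mul
    (isWeightedHomogeneous_X ℝ (bw n m) (Sum.inl j))).mul
    ((isWeightedHomogeneous_X ℝ (bw n m) (Sum.inr k)).mul
    (isWeightedHomogeneous_X ℝ (bw n m) (Sum.inr l))))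

lemma poly_mem_biform (b : Sym2 (Fin n) × Sym2 (Fin m) → ℝ) : poly n m b ∈ Biform n m 2 2 := by
  rw [poly_apply]
  exact Submodule.sum_mem (weightedHomogeneousSubmodule ℝ (bw n m) (2, 2))
    fun p _ => Submodule.smul_mem _ _ (polyMon_mem_biform p)

lemma polyLin_mem_biform (w : Fin n × Fin m → ℝ) : polyLin n m w ∈ Biform n m 1 1 := by
  rw [polyLin, Fintype.linearCombination_apply]
  exact Submodule.sum_mem (weightedHomogeneousSubmodule ℝ (bw n m) (1, 1))
    fun p _ => Submodule.smul_mem _ _ ((isWeightedHomogeneous_X ℝ (bw n m) (Sum.inl p.1)).mul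
      (isWeightedHomogeneous_X ℝ (bw n m) (Sum.inr p.2)))

/-- The exponents of the monomials of a biform. -/
lemma degrees_of_mem_biform {k₁ k₂ : ℕ} {f : MvPolynomial (Fin n ⊕ Fin m) ℝ}
    (hf : f ∈ Biform n m k₁ k₂) {d : Fin n ⊕ Fin m →₀ ℕ} (hd : d ∈ f.support) :
    ∃ (s : Multiset (Fin n)) (t : Multiset (Fin m)), s.card = k₁ ∧ t.card = k₂ ∧
      monomial d (1 : ℝ) = (s.map fun i => X (Sum.inl i)).prod *
        (t.map fun j => X (Sum.inr j)).prod := by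
  have hw := hf (mem_support_iff.1 hd)
  rw [Finsupp.weight_apply, Finsupp.sum_fintype _ _ (by simp), Fintype.sum_sum_type] at hw
  simp only [bw, Sum.elim_inl, Sum.elim_inr, Prod.smul_mk, smul_eq_mul, mul_one, mul_zero,
    Prod.ext_iff, Prod.fst_add, Prod.snd_add, Prod.fst_sum, Prod.snd_sum, Finset.sum_const_zero,
    add_zero, zero_add] at hw
  refine ⟨∑ i, d (Sum.inl i) • {i}, ∑ j, d (Sum.inr j) • {j}, ?_, ?_, ?_⟩
  · simpa using hw.1
  · simpa using hw.2
  · rw [monomial_eq, C_1, one_mul, Finsupp.prod_fintype _ _ (by simp), Fintype.prod_sum_type]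
    congr 1
    · rw [← Multiset.coe_mapAddMonoidHom, map_sum, Multiset.prod_sum]
      simp [Multiset.map_nsmul, Multiset.prod_nsmul]
    · rw [← Multiset.coe_mapAddMonoidHom, map_sum, Multiset.prod_sum]
      simp [Multiset.map_nsmul, Multiset.prod_nsmul]

lemma biform_subset {k₁ k₂ : ℕ} (V : Submodule ℝ (MvPolynomial (Fin n ⊕ Fin m) ℝ))
    (hV : ∀ (s : Multiset (Fin n)) (t : Multiset (Fin m)), s.card = k₁ → t.card = k₂ →
      (s.map fun i => X (Sum.inl i)).prod * (t.map fun j => X (Sum.inr j)).prod ∈ V)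
    {f : MvPolynomial (Fin n ⊕ Fin m) ℝ} (hf : f ∈ Biform n m k₁ k₂) : f ∈ V := by
  rw [f.as_sum]
  refine V.sum_mem fun d hd => ?_
  obtain ⟨s, t, hs, ht, h⟩ := degrees_of_mem_biform hf hd
  rw [show monomial d (coeff d f) = coeff d f • monomial d (1 : ℝ) by simp [smul_monomial], h]
  exact V.smul_mem _ (hV s t hs ht)

lemma exists_poly_eq {f : MvPolynomial (Fin n ⊕ Fin m) ℝ} (hf : f ∈ Biform n m 2 2) :
    ∃ b, poly n m b = f := by
  refine biform_subset (LinearMap.range (poly n m)) (fun s t hs ht => ?_) hf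
  obtain ⟨i, j, rfl⟩ := Multiset.card_eq_two.1 hs
  obtain ⟨k, l, rfl⟩ := Multiset.card_eq_two.1 ht
  refine ⟨Pi.single (s(i, j), s(k, l)) 1, ?_⟩
  simp [poly, Fintype.linearCombination_apply_single, polyMon]

lemma exists_polyLin_eq {f : MvPolynomial (Fin n ⊕ Fin m) ℝ} (hf : f ∈ Biform n m 1 1) :
    ∃ w, polyLin n m w = f := by
  refine biform_subset (LinearMap.range (polyLin n m)) (fun s t hs ht => ?_) hf
  obtain ⟨i, rfl⟩ := Multiset.card_eq_one.1 hs
  obtain ⟨k, rfl⟩ := Multiset.card_eq_one.1 ht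
  refine ⟨Pi.single (i, k) 1, ?_⟩
  simp [polyLin, Fintype.linearCombination_apply_single]

lemma poly_qC : poly n m (qC (Fin n) (Fin m)) = qpoly n m 1 1 :=
  funext_beval fun x y => by
    rw [beval_poly, bq_qC]
    simp [beval, qpoly, nsq]

lemma poly_mem_posSet {b : Sym2 (Fin n) × Sym2 (Fin m) → ℝ} :
    poly n m b ∈ PosSet n m 1 1 ↔ b ∈ posC (Fin n) (Fin m) :=
  ⟨fun h x y => by rw [← beval_poly]; exact h.2 x y,
    fun h => ⟨poly_mem_biform b, fun x y => by rw [beval_poly]; exact h x y⟩⟩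

lemma poly_mem_sqSet {b : Sym2 (Fin n) × Sym2 (Fin m) → ℝ} :
    poly n m b ∈ SqSet n m 1 1 ↔ b ∈ sqC (Fin n) (Fin m) := by
  have hsum {N : ℕ} (g : Fin N → MvPolynomial (Fin n ⊕ Fin m) ℝ) (x : Fin n → ℝ)
      (y : Fin m → ℝ) : beval (∑ i, g i ^ 2) x y = ∑ i, beval (g i) x y ^ 2 := by
    simp [beval]
  constructor
  · rintro ⟨N, g, hg, h⟩
    choose w hw using fun i => exists_polyLin_eq (hg i)
    refine ⟨∑ i, sqc (w i), fun u => ?_, bq_injective fun x y => ?_⟩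
    · rw [qf_sum]
      exact Finset.sum_nonneg fun i _ => by rw [qf_sqc]; exact sq_nonneg _
    · rw [bq_restr, qf_sum, ← beval_poly, h, hsum]
      exact Finset.sum_congr rfl fun i _ => by rw [qf_sqc, ← hw, beval_polyLin]
  · rintro ⟨a, ha, rfl⟩
    obtain ⟨N, w, hw⟩ := exists_qf_eq_sum_sq ha
    refine ⟨N, fun i => polyLin n m (w i), fun i => polyLin_mem_biform _,
      funext_beval fun x y => ?_⟩
    rw [beval_poly, bq_restr, hw, hsum]
    simp only [beval_polyLin]

end Polynomials

section Sphere

variable {n m : ℕ} {σ : Measure (Fin n → ℝ)}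

lemma ae_mem_unitSphere (hσ : IsSphereMeasure n σ) : ∀ᵐ x ∂σ, x ∈ unitSphere n :=
  hσ.onSphere

lemma integral_comp_mulVec (hσ : IsSphereMeasure n σ) {Q : Matrix (Fin n) (Fin n) ℝ}
    (hQ : Q * Q.transpose = 1) {f : (Fin n → ℝ) → ℝ} (hf : Continuous f) :
    ∫ x, f (Q.mulVec x) ∂σ = ∫ x, f x ∂σ := by
  conv_rhs => rw [← hσ.invariant Q hQ]
  rw [integral_map (by fun_prop) hf.aestronglyMeasurable]

lemma abs_le_one_of_mem_unitSphere {x : Fin n → ℝ} (hx : x ∈ unitSphere n) (i : Fin n) :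
    |x i| ≤ 1 := by
  rw [← sq_le_one_iff_abs_le_one, ← show ∑ i, x i ^ 2 = 1 from hx]
  exact Finset.single_le_sum (f := fun i => x i ^ 2) (fun i _ => sq_nonneg _) (Finset.mem_univ i)

lemma integrable_mul_apply (hσ : IsSphereMeasure n σ) (i j : Fin n) :
    Integrable (fun x => x i * x j) σ := by
  have := hσ.prob
  refine Integrable.of_bound (by fun_prop) 1 ?_
  filter_upwards [ae_mem_unitSphere hσ] with x hx
  rw [Real.norm_eq_abs, abs_mul]
  exact mul_le_one₀ (abs_le_one_of_mem_unitSphere hx i) (abs_nonneg _)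
    (abs_le_one_of_mem_unitSphere hx j)

lemma integral_mul_apply_of_ne (hσ : IsSphereMeasure n σ) {i j : Fin n} (hij : i ≠ j) :
    ∫ x, x i * x j ∂σ = 0 := by
  have h := integral_comp_mulVec hσ
    (Q := Matrix.diagonal fun k => if k = i then (-1 : ℝ) else 1) (by
      rw [Matrix.diagonal_transpose, Matrix.diagonal_mul_diagonal, ← Matrix.diagonal_one]
      congr 1; funext k; split_ifs <;> norm_num) (f := fun x => x i * x j) (by fun_prop)
  simp only [Matrix.mulVec_diagonal, if_true, hij.symm, if_false, neg_mul, one_mul,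
    integral_neg] at h
  linarith

lemma integral_sq_apply (hσ : IsSphereMeasure n σ) (i : Fin n) :
    ∫ x, x i * x i ∂σ = 1 / n := by
  have := hσ.prob
  have hsymm (j : Fin n) : ∫ x, x j * x j ∂σ = ∫ x, x i * x i ∂σ := by
    have h := integral_comp_mulVec hσ (Q := (Equiv.swap i j).permMatrix ℝ) (by
      rw [Matrix.transpose_permMatrix, ← Matrix.permMatrix_mul]; simp)
      (f := fun x => x i * x i) (by fun_prop)
    simpa [Matrix.permMatrix_mulVec] using h
  have hsum : ∑ j, ∫ x, x j * x j ∂σ = 1 := by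
    rw [← integral_finsetSum _ fun j _ => integrable_mul_apply hσ j j,
      integral_congr_ae (g := fun _ => (1 : ℝ))]
    · simp
    · filter_upwards [ae_mem_unitSphere hσ] with x hx
      simpa [unitSphere, sq] using hx
  have hn : (n : ℝ) ≠ 0 := Nat.cast_ne_zero.2 i.pos.ne'
  rw [Finset.sum_congr rfl fun j _ => hsymm j, Finset.sum_const, Finset.card_univ,
    Fintype.card_fin, nsmul_eq_mul] at hsum
  rw [eq_div_iff hn, mul_comm, hsum]

lemma integrable_mon (hσ : IsSphereMeasure n σ) (p : Sym2 (Fin n)) :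
    Integrable (fun x => mon x p) σ := by
  induction p with | _ i j => exact integrable_mul_apply hσ i j

lemma integral_mon (hσ : IsSphereMeasure n σ) (p : Sym2 (Fin n)) :
    ∫ x, mon x p ∂σ = ∑ i, if p = s(i, i) then 1 / (n : ℝ) else 0 := by
  induction p with | _ i j =>
  by_cases hij : i = j
  · subst hij
    simp only [mon_mk, integral_sq_apply hσ]
    rw [Finset.sum_eq_single i] <;> simp +contextual [eq_comm]
  · rw [Finset.sum_eq_zero fun k _ => if_neg ?_]
    · exact integral_mul_apply_of_ne hσ hij
    · simp only [Sym2.eq_iff]; rintro (⟨rfl, rfl⟩ | ⟨rfl, rfl⟩) <;> exact hij rfl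

lemma bavg_poly {τ : Measure (Fin m → ℝ)} (hσ : IsSphereMeasure n σ) (hτ : IsSphereMeasure m τ)
    (b : Sym2 (Fin n) × Sym2 (Fin m) → ℝ) :
    bavg σ τ (poly n m b) = btr (Fin n) (Fin m) b / (n * m) := by
  have h : bavg σ τ (poly n m b) =
      ∑ p : Sym2 (Fin n) × Sym2 (Fin m), b p * ((∫ x, mon x p.1 ∂σ) * ∫ y, mon y p.2 ∂τ) := by
    have h1 (x : Fin n → ℝ) : ∫ y, beval (poly n m b) x y ∂τ =
        ∑ p : Sym2 (Fin n) × Sym2 (Fin m), b p * (mon x p.1 * ∫ y, mon y p.2 ∂τ) := by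
      simp only [beval_poly, bq]
      rw [integral_finsetSum _ fun p _ => ((integrable_mon hτ p.2).const_mul _).const_mul _]
      simp only [integral_const_mul]
    simp only [bavg, h1]
    rw [integral_finsetSum _ fun p _ => ((integrable_mon hσ p.1).mul_const _).const_mul _]
    simp only [integral_const_mul, integral_mul_const]
  simp only [h, integral_mon hσ, integral_mon hτ, Finset.sum_mul_sum]
  simp only [Finset.mul_sum]
  rw [Finset.sum_comm, btr_apply, Finset.sum_div]
  refine Finset.sum_congr rfl fun i _ => ?_
  rw [Finset.sum_comm, Finset.sum_div]
  refine Finset.sum_congr rfl fun j _ => ?_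
  rw [Finset.sum_eq_single (s(i, i), s(j, j))]
  · simp; ring
  · rintro ⟨p, q⟩ _ hpq
    by_cases hp : p = s(i, i)
    · rw [if_neg (c := _ = s(j, j)) fun hq => hpq (Prod.ext hp hq)]; simp
    · simp [hp]
  · simp

end Sphere

section Transfer

variable {n m D : ℕ} {σ : Measure (Fin n → ℝ)} {τ : Measure (Fin m → ℝ)}

lemma card_sym2_prod (n m : ℕ) : Fintype.card (Sym2 (Fin n) × Sym2 (Fin m)) =
    (n + 1).choose 2 * (m + 1).choose 2 := by
  rw [Fintype.card_prod, Sym2.card, Sym2.card, Fintype.card_fin, Fintype.card_fin]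

/-- Ratios of volumes of the sections are ratios of exponential integrals over the cones. -/
lemma volume_div_volume_eq (hn : 0 < n) (hm : 0 < m)
    (hD : (n + 1).choose 2 * (m + 1).choose 2 = D + 1)
    (hσ : IsSphereMeasure n σ) (hτ : IsSphereMeasure m τ)
    {ψ : (Fin D → ℝ) →ₗ[ℝ] MvPolynomial (Fin n ⊕ Fin m) ℝ}
    (hψ : IsUnitaryParam n m D σ τ (MSet n m 1 1 σ τ) ψ) :
    volume (⇑ψ ⁻¹' tilde n m 1 1 σ τ (SqSet n m 1 1)) /
      volume (⇑ψ ⁻¹' tilde n m 1 1 σ τ (PosSet n m 1 1)) =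
    expInt (sqC (Fin n) (Fin m)) (btr (Fin n) (Fin m)) /
      expInt (posC (Fin n) (Fin m)) (btr (Fin n) (Fin m)) := by
  have hmem (a : Fin D → ℝ) : ψ a ∈ MSet n m 1 1 σ τ := by
    rw [← hψ.range]; exact Set.mem_range_self a
  let χ : (Fin D → ℝ) →ₗ[ℝ] (Sym2 (Fin n) × Sym2 (Fin m) → ℝ) :=
    (LinearEquiv.ofInjective (poly n m) poly_injective).symm.toLinearMap ∘ₗ
      ψ.codRestrict (LinearMap.range (poly n m)) fun a => exists_poly_eq (hmem a).1
  have hχ (a : Fin D → ℝ) : poly n m (χ a) = ψ a :=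
    LinearEquiv.ofInjective_symm_apply (poly n m) (h := poly_injective) _
  have hinj : Function.Injective χ := fun a a' h => hψ.inj (by rw [← hχ, h, hχ])
  have hnm : (n : ℝ) * m ≠ 0 := by positivity
  have htr (a : Fin D → ℝ) : btr (Fin n) (Fin m) (χ a) = 0 := by
    have := (hmem a).2
    rw [← hχ, bavg_poly hσ hτ, div_eq_zero_iff] at this
    exact this.resolve_right hnm
  have hq : 0 < btr (Fin n) (Fin m) (qC (Fin n) (Fin m)) := by
    rw [btr_qC, Fintype.card_fin, Fintype.card_fin]; positivity
  obtain ⟨γ, hγ0, hγ, H⟩ := exists_expInt_eq_mul_volume ((card_sym2_prod n m).trans hD)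
    (btr (Fin n) (Fin m)) (qC (Fin n) (Fin m)) hq χ hinj htr
  rw [H _ convex_posC (fun t ht b hb => smul_mem_posC ht hb) fun b hb => btr_nonneg hb,
    H _ convex_sqC (fun t ht b hb => smul_mem_sqC ht hb)
      fun b hb => btr_nonneg (bq_restr_nonneg hb), ENNReal.mul_div_mul_left _ _ hγ0 hγ]
  have hadd (a : Fin D → ℝ) :
      ψ a + qpoly n m 1 1 = poly n m (χ a + qC (Fin n) (Fin m)) := by
    rw [map_add, hχ, poly_qC]
  congr 2
  · ext a
    simp only [tilde, Set.mem_preimage, Set.mem_ofPred_eq, hmem, true_and, hadd, poly_mem_sqSet]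
  · ext a
    simp only [tilde, Set.mem_preimage, Set.mem_ofPred_eq, hmem, true_and, hadd, poly_mem_posSet]

end Transfer

section Numerics

lemma sqrt_pi_bounds : 1.77 ≤ √Real.pi ∧ √Real.pi ≤ 1.8 :=
  ⟨Real.le_sqrt_of_sq_le (by have := Real.pi_gt_d2; norm_num at this ⊢; linarith),
    Real.sqrt_le_iff.2 ⟨by norm_num, by have := Real.pi_lt_d2; norm_num at this ⊢; linarith⟩⟩

lemma rate_eq (N : ℝ) : rate N = 2 * √Real.pi * √N * Real.exp (-1 / 2) := by
  have h : 4 * Real.pi * N / Real.exp 1 = (2 * Real.exp (-1 / 2)) ^ 2 * (Real.pi * N) := by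
    rw [mul_pow, ← Real.exp_nat_mul, show ((2 : ℕ) : ℝ) * (-1 / 2) = -1 by norm_num, Real.exp_neg]
    ring
  rw [rate, h, Real.sqrt_mul (sq_nonneg _), Real.sqrt_sq (by positivity),
    Real.sqrt_mul Real.pi_pos.le]
  ring

lemma rate_le (N : ℝ) : rate N ≤ 2.2 * √N := by
  have h : 4 * Real.pi / Real.exp 1 ≤ 2.2 ^ 2 := by
    have h1 := Real.pi_lt_d2
    have h2 := Real.exp_one_gt_d9
    rw [div_le_iff₀ (Real.exp_pos 1)]
    norm_num at h1 h2 ⊢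
    linarith
  rw [rate, show 4 * Real.pi * N / Real.exp 1 = 4 * Real.pi / Real.exp 1 * N by ring,
    Real.sqrt_mul (by positivity)]
  gcongr
  exact Real.sqrt_le_iff.2 ⟨by norm_num, h⟩

lemma le_lowerBound {N d k : ℕ} {p : ℝ} (hp : 0 ≤ p) (hd : (d : ℝ) / N = p / 4) :
    1 / 4 * (0.04 * p / √k) ^ d ≤ lowerBound N d k := by
  have h : 0.04 * p / √k ≤ Real.exp (-1) * (p / 4) * √(Real.pi / (16 * k * 1)) := by
    have h1 := Real.exp_neg_one_gt_d9
    have h2 := sqrt_pi_bounds.1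
    rw [mul_one, Real.sqrt_div Real.pi_pos.le, Real.sqrt_mul (by norm_num),
      show (16 : ℝ) = 4 ^ 2 by norm_num, Real.sqrt_sq (by norm_num)]
    have h3 : 0.64 ≤ Real.exp (-1) * √Real.pi := by
      calc (0.64 : ℝ) ≤ 0.367 * 1.77 := by norm_num
        _ ≤ _ := mul_le_mul (by linarith) h2 (by norm_num) (Real.exp_pos _).le
    calc 0.04 * p / √k = 0.64 * (p / 16 / √k) := by ring
      _ ≤ Real.exp (-1) * √Real.pi * (p / 16 / √k) := by gcongr
      _ = _ := by ring
  calc 1 / 4 * (0.04 * p / √k) ^ d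
      ≤ 1 / 4 * (Real.exp (-1) * (p / 4) * √(Real.pi / (16 * k * 1))) ^ d := by gcongr
    _ = lowerBound N d k := by
      rw [lowerBound, hd, mul_pow, mul_pow, ← Real.exp_nat_mul]
      ring_nf

lemma two_pow_mul_rate_pow_le {N d k : ℕ} (hN : 9 ≤ N) (hC : N.choose 2 + N = d + k)
    (hkd : k ≤ d) :
    2 ^ N * rate N ^ N.choose 2 ≤ 2 * (176 * √N) ^ d * (Real.exp (-((N : ℝ) / 4 * N)) *
      (((N : ℝ) / 4) ^ k * (1 / 2 * √(Real.pi / (16 * (N + 1 : ℕ) * 2)) ^ k))) := by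
  have hN' : (9 : ℝ) ≤ N := by exact_mod_cast hN
  set s := √(N : ℝ) with hs
  have hs3 : 3 ≤ s := Real.le_sqrt_of_sq_le (by linarith)
  have hss : s ^ 2 = N := Real.sq_sqrt (by linarith)
  have hg : 0.074 * s ≤ N / 4 * √(Real.pi / (16 * (N + 1 : ℕ) * 2)) := by
    have h1 : (0.296 / s) ≤ √(Real.pi / (16 * (N + 1 : ℕ) * 2)) := by
      refine Real.le_sqrt_of_sq_le ?_
      have := Real.pi_gt_d2
      rw [div_pow, hss, div_le_div_iff₀ (by positivity) (by positivity)]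
      push_cast
      nlinarith
    calc 0.074 * s = s ^ 2 / 4 * (0.296 / s) := by field_simp; norm_num
      _ ≤ _ := by rw [hss]; gcongr
  have hexp : Real.exp (-1 / 2) ^ N.choose 2 ≤ Real.exp 1 ^ N * Real.exp (-((N : ℝ) / 4 * N)) := by
    rw [← Real.exp_nat_mul, ← Real.exp_nat_mul, ← Real.exp_add, Nat.cast_choose_two]
    exact Real.exp_le_exp.2 (by nlinarith)
  have he : 2 * Real.exp 1 ≤ 3.6 * s := by have := Real.exp_one_lt_d9; linarith
  have h2 : 2 * √Real.pi ≤ 3.6 := by linarith [sqrt_pi_bounds.2]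
  calc 2 ^ N * rate N ^ N.choose 2
      = 2 ^ N * (2 * √Real.pi * s) ^ N.choose 2 * Real.exp (-1 / 2) ^ N.choose 2 := by
        rw [rate_eq, mul_pow]; ring
    _ ≤ 2 ^ N * (3.6 * s) ^ N.choose 2 *
          (Real.exp 1 ^ N * Real.exp (-((N : ℝ) / 4 * N))) := by gcongr
    _ = (2 * Real.exp 1) ^ N * (3.6 * s) ^ N.choose 2 * Real.exp (-((N : ℝ) / 4 * N)) := by
        rw [mul_pow]; ring
    _ ≤ (3.6 * s) ^ N * (3.6 * s) ^ N.choose 2 * Real.exp (-((N : ℝ) / 4 * N)) := by gcongr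
    _ = (3.6 * s) ^ d * (3.6 * s) ^ k * Real.exp (-((N : ℝ) / 4 * N)) := by
        rw [← pow_add, ← pow_add, add_comm N, hC]
    _ ≤ (3.6 * s) ^ d * (48.7 * (0.074 * s)) ^ k * Real.exp (-((N : ℝ) / 4 * N)) := by
        gcongr _ * ?_ ^ k * _; linarith
    _ ≤ (3.6 * s) ^ d * (48.7 ^ d * (0.074 * s) ^ k) * Real.exp (-((N : ℝ) / 4 * N)) := by
        rw [mul_pow 48.7]; gcongr; norm_num
    _ = (3.6 * 48.7 * s) ^ d * (Real.exp (-((N : ℝ) / 4 * N)) * (0.074 * s) ^ k) := by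
        simp only [mul_pow]; ring
    _ ≤ (176 * s) ^ d * (Real.exp (-((N : ℝ) / 4 * N)) *
          (N / 4 * √(Real.pi / (16 * (N + 1 : ℕ) * 2))) ^ k) := by gcongr; norm_num
    _ = _ := by rw [mul_pow ((N : ℝ) / 4)]; ring

end Numerics

section Bounds

variable {n m d : ℕ}

lemma four_mul_card (hd : (n + 1).choose 2 * (m + 1).choose 2 = d) :
    4 * (d : ℝ) = n * m * ((n + 1) * (m + 1)) := by
  rw [← hd]; push_cast [Nat.cast_choose_two]; ring

lemma card_div (hn : 0 < n) (hm : 0 < m) (hd : (n + 1).choose 2 * (m + 1).choose 2 = d) :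
    (d : ℝ) / (n * m : ℕ) = (n + 1) * (m + 1) / 4 := by
  have := four_mul_card hd
  push_cast
  rw [div_eq_div_iff (by positivity) (by norm_num)]
  linarith

lemma card_pos (hn : 0 < n) (hm : 0 < m) (hd : (n + 1).choose 2 * (m + 1).choose 2 = d) :
    0 < d := by
  have := four_mul_card hd
  have : (0 : ℝ) < d := by
    have : (0 : ℝ) < n * m * ((n + 1) * (m + 1)) := by positivity
    linarith
  exact_mod_cast this

lemma le_expInt_posC (hn : 2 ≤ n) (hm : 2 ≤ m) (hd : (n + 1).choose 2 * (m + 1).choose 2 = d) :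
    ENNReal.ofReal (1 / 4 * (0.04 * (((n : ℝ) + 1) * (m + 1)) / √(n + m)) ^ d) ≤
      expInt (posC (Fin n) (Fin m)) (btr (Fin n) (Fin m)) := by
  refine le_trans (ENNReal.ofReal_le_ofReal ?_) (expInt_posC_ge (N := n * m) (d := d) (k := n + m)
    (by simp) (by positivity) ((card_sym2_prod n m).trans hd)
    (card_pos (by lia) (by lia) hd) (by simp) (by lia))
  have := le_lowerBound (N := n * m) (d := d) (k := n + m) (p := ((n : ℝ) + 1) * (m + 1))
    (by positivity) (card_div (by lia) (by lia) hd)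
  exact_mod_cast this

lemma le_expInt_sqC (hn : 2 ≤ n) (hm : 2 ≤ m) (hd : (n + 1).choose 2 * (m + 1).choose 2 = d) :
    ENNReal.ofReal (1 / 4 * (0.04 * (√n * √m)) ^ d) ≤
      expInt (sqC (Fin n) (Fin m)) (btr (Fin n) (Fin m)) := by
  refine le_trans (ENNReal.ofReal_le_ofReal ?_) (expInt_sqC_ge (N := n * m) (d := d)
    (by simp) (by nlinarith) ((card_sym2_prod n m).trans hd) (card_pos (by lia) (by lia) hd))
  refine le_trans ?_ (le_lowerBound (N := n * m) (d := d) (k := n * m + 1)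
    (p := ((n : ℝ) + 1) * (m + 1)) (by positivity) (card_div (by lia) (by lia) hd))
  rw [mul_div_assoc]
  gcongr
  rw [le_div_iff₀ (by positivity), ← Real.sqrt_mul (by positivity), ← Real.sqrt_mul (by positivity)]
  refine Real.sqrt_le_iff.2 ⟨by positivity, ?_⟩
  push_cast
  have : (0 : ℝ) ≤ (n : ℝ) * m := by positivity
  nlinarith [this, (n.cast_nonneg : (0 : ℝ) ≤ n), (m.cast_nonneg : (0 : ℝ) ≤ m)]

lemma expInt_posC_le_pow (hn : 0 < n) (hm : 3 ≤ m)
    (hd : (n + 1).choose 2 * (m + 1).choose 2 = d) :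
    expInt (posC (Fin n) (Fin m)) (btr (Fin n) (Fin m)) ≤
      ENNReal.ofReal ((13.2 * (n * √m)) ^ d) := by
  set s := (n + 1).choose 2 with hs
  have hS : Fintype.card (Sym2 (Fin n)) = s := by rw [Sym2.card, Fintype.card_fin]
  have hmd : s * (2 * m) ≤ d := by
    rw [← hd]
    refine Nat.mul_le_mul_left _ ?_
    have : (2 * m : ℝ) ≤ ((m + 1).choose 2 : ℕ) := by
      have : (3 : ℝ) ≤ m := by exact_mod_cast hm
      push_cast [Nat.cast_choose_two]; nlinarith
    exact_mod_cast this
  have hcd : m.choose 2 * s ≤ d := by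
    rw [← hd, mul_comm]
    exact Nat.mul_le_mul_left _ (Nat.choose_le_choose _ (Nat.le_succ m))
  have hsm : 1 ≤ √(m : ℝ) := Real.one_le_sqrt.2 (by exact_mod_cast (by lia : 1 ≤ m))
  have hpsd : expInt (psd (Fin m)) tr ≤
      ENNReal.ofReal (2 ^ m * rate m ^ m.choose 2) := by
    simpa using expInt_psd_le (N := m) (by positivity) (Fin m) (by simp)
  refine (expInt_posC_le (by simpa using hn)).trans ?_
  rw [hS, card_sym2_prod, hd, Fintype.card_fin]
  calc _ ≤ ENNReal.ofReal ((4 * n) ^ d) * ENNReal.ofReal (2 ^ m * rate m ^ m.choose 2) ^ s := by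
        gcongr
    _ = ENNReal.ofReal ((4 * n) ^ d * (2 ^ m * rate m ^ m.choose 2) ^ s) := by
        rw [ENNReal.ofReal_mul (p := (4 * (n : ℝ)) ^ d) (by positivity), ← ENNReal.ofReal_pow]
        exact mul_nonneg (by positivity) (pow_nonneg (rate_nonneg _) _)
    _ ≤ _ := ENNReal.ofReal_le_ofReal ?_
  calc ((4 : ℝ) * n) ^ d * (2 ^ m * rate m ^ m.choose 2) ^ s
      = (4 * n) ^ d * (2 ^ (m * s) * rate m ^ (m.choose 2 * s)) := by
        rw [mul_pow (2 ^ m), pow_mul, pow_mul]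
    _ ≤ (4 * n) ^ d * ((1.5 ^ 2) ^ (m * s) * (2.2 * √m) ^ (m.choose 2 * s)) := by
        have := rate_nonneg (m : ℝ)
        gcongr
        · norm_num
        · exact rate_le _
    _ ≤ (4 * n) ^ d * (1.5 ^ d * (2.2 * √m) ^ d) := by
        rw [← pow_mul, show 2 * (m * s) = s * (2 * m) by ring]
        gcongr
        · norm_num
        · linarith
    _ = _ := by simp only [← mul_pow]; ring_nf

lemma expInt_sqC_le_pow (hn : 3 ≤ n) (hm : 3 ≤ m)
    (hd : (n + 1).choose 2 * (m + 1).choose 2 = d) :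
    expInt (sqC (Fin n) (Fin m)) (btr (Fin n) (Fin m)) ≤
      ENNReal.ofReal (2 * (176 * (√n * √m)) ^ d) := by
  have hN : 9 ≤ n * m := Nat.mul_le_mul hn hm
  have hC : (n * m).choose 2 + n * m = d + Fintype.card (Rest (Fin n) (Fin m)) := by
    have h := Fintype.card_congr (lftEquiv (Fin n) (Fin m))
    rw [Fintype.card_sum, card_sym2_prod, hd, Sym2.card, Fintype.card_prod, Fintype.card_fin,
      Fintype.card_fin, Nat.choose_succ_succ, Nat.choose_one_right, add_comm (n * m)] at h
    exact h.symm
  generalize hk : Fintype.card (Rest (Fin n) (Fin m)) = k at hC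
  have hkd : k ≤ d := by
    have h1 := four_mul_card hd
    have h2 : (((n * m).choose 2 : ℕ) : ℝ) + n * m = d + k := by exact_mod_cast hC
    rw [Nat.cast_choose_two] at h2
    push_cast at h2
    have : (0 : ℝ) ≤ n * m * (n + m) := by positivity
    have : (k : ℝ) ≤ d := by nlinarith
    exact_mod_cast this
  have h1 := expInt_sqC_le (ι := Fin n) (κ := Fin m) (N := n * m) (by simp) (by lia) hk
    (t := (n * m : ℕ) / 4) (by positivity)
  have h2 := expInt_psd_le (N := (n * m : ℕ)) (by positivity) (Fin n × Fin m) (by simp)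
  rw [Fintype.card_prod, Fintype.card_fin, Fintype.card_fin] at h2
  have h3 := (h1.trans h2).trans (ENNReal.ofReal_le_ofReal (two_pow_mul_rate_pow_le hN hC hkd))
  rw [ENNReal.ofReal_mul (p := 2 * _ ^ d) (by positivity)] at h3
  rw [← Real.sqrt_mul (Nat.cast_nonneg n), ← Nat.cast_mul]
  refine (ENNReal.mul_le_mul_iff_left ?_ ENNReal.ofReal_ne_top).1 h3
  rw [ne_eq, ENNReal.ofReal_eq_zero, not_le]
  positivity

end Bounds

section Ratio

variable {n m D : ℕ}

lemma lower_lt {u v : ℝ} (hu : 0 < u) (hv : 0 < v) (hun : u ≤ n) (hD : n + 3 ≤ D) :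
    (0.000105 / u) ^ D * (13.2 * (u ^ 2 * v)) ^ (D + 1) <
      1 / 4 * (0.04 * (u * v)) ^ (D + 1) := by
  set K := (0.001386 * (u * v)) ^ D with hK
  have hK0 : 0 < K := by positivity
  have h28 : 2000 * u ≤ (28 : ℝ) ^ D := by
    have h1 : (n : ℝ) ≤ 28 ^ n := by exact_mod_cast (Nat.lt_pow_self (by norm_num)).le
    calc 2000 * u ≤ 28 ^ 3 * 28 ^ n := by nlinarith
      _ = (28 : ℝ) ^ (n + 3) := by ring
      _ ≤ _ := pow_le_pow_right₀ (by norm_num) hD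
  have hlow : 28 ^ D * K ≤ (0.04 * (u * v)) ^ D := by
    rw [hK, ← mul_pow]
    have : 0 < u * v := by positivity
    exact pow_le_pow_left₀ (by positivity) (by linarith) D
  calc (0.000105 / u) ^ D * (13.2 * (u ^ 2 * v)) ^ (D + 1) = K * (13.2 * u * (u * v)) := by
        rw [pow_succ, ← mul_assoc, ← mul_pow, hK]
        rw [show 0.000105 / u * (13.2 * (u ^ 2 * v)) = 0.001386 * (u * v) by field_simp; norm_num]
        ring
    _ < K * (20 * u * (u * v)) := by gcongr; norm_num
    _ = 0.01 * (2000 * u * K) * (u * v) := by ring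
    _ ≤ 0.01 * (28 ^ D * K) * (u * v) := by gcongr
    _ ≤ 0.01 * (0.04 * (u * v)) ^ D * (u * v) := by gcongr
    _ = _ := by rw [pow_succ]; ring

/-- The lower bound for the ratio, in terms of the number of the first variables. -/
lemma lower_lt_ratio (hn : 3 ≤ n) (hm : 3 ≤ m)
    (hD : (n + 1).choose 2 * (m + 1).choose 2 = D + 1) {V W : ENNReal} (hV : V ≠ 0)
    (hW : ENNReal.ofReal (1 / 4 * (0.04 * (√n * √m)) ^ (D + 1)) ≤ W)
    (hVle : V ≤ ENNReal.ofReal ((13.2 * (n * √m)) ^ (D + 1))) :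
    ENNReal.ofReal (0.000105 / √n) ^ D < W / V := by
  have hn0 : (3 : ℝ) ≤ n := by exact_mod_cast hn
  have hm0 : (3 : ℝ) ≤ m := by exact_mod_cast hm
  have hu : 0 < √(n : ℝ) := Real.sqrt_pos.2 (by linarith)
  have hv : 0 < √(m : ℝ) := Real.sqrt_pos.2 (by linarith)
  have hDn : n + 3 ≤ D := by
    have h1 := four_mul_card hD
    have : (n : ℝ) + 3 ≤ D := by
      push_cast at h1
      have : (12 : ℝ) ≤ m * (m + 1) := by nlinarith
      have : (n : ℝ) * (n + 1) * 12 ≤ n * (n + 1) * (m * (m + 1)) := by gcongr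
      nlinarith
    exact_mod_cast this
  rw [ENNReal.lt_div_iff_mul_lt (.inl hV) (.inl (hVle.trans_lt ENNReal.ofReal_lt_top).ne)]
  refine lt_of_lt_of_le ?_ hW
  calc _ ≤ ENNReal.ofReal (0.000105 / √n) ^ D * ENNReal.ofReal ((13.2 * (n * √m)) ^ (D + 1)) := by
        gcongr
    _ = ENNReal.ofReal ((0.000105 / √n) ^ D * (13.2 * (√n ^ 2 * √m)) ^ (D + 1)) := by
        rw [← ENNReal.ofReal_pow (by positivity), ← ENNReal.ofReal_mul (by positivity),
          Real.sq_sqrt (by linarith)]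
    _ < _ := (ENNReal.ofReal_lt_ofReal_iff (by positivity)).2 (lower_lt hu hv
        (Real.sqrt_le_iff.2 ⟨by linarith, by nlinarith⟩) hDn)

lemma expInt_posC_ne_zero (hn : 3 ≤ n) (hm : 3 ≤ m) :
    expInt (posC (Fin n) (Fin m)) (btr (Fin n) (Fin m)) ≠ 0 := by
  refine ((ENNReal.ofReal_pos.2 ?_).trans_le (le_expInt_posC (by lia) (by lia) rfl)).ne'
  have : 0 < (n : ℝ) + m := by positivity
  positivity

lemma expInt_posC_ne_top (hn : 3 ≤ n) (hm : 3 ≤ m) :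
    expInt (posC (Fin n) (Fin m)) (btr (Fin n) (Fin m)) ≠ ⊤ :=
  ((expInt_posC_le_pow (by lia) hm rfl).trans_lt ENNReal.ofReal_lt_top).ne

lemma lower_bound_pow_lt (hn : 3 ≤ n) (hm : 3 ≤ m)
    (hD : (n + 1).choose 2 * (m + 1).choose 2 = D + 1) :
    ENNReal.ofReal (0.000105 / √(min n m : ℕ)) ^ D <
      expInt (sqC (Fin n) (Fin m)) (btr (Fin n) (Fin m)) /
        expInt (posC (Fin n) (Fin m)) (btr (Fin n) (Fin m)) := by
  have hW := le_expInt_sqC (by lia) (by lia) hD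
  rcases le_total n m with h | h
  · rw [min_eq_left h]
    exact lower_lt_ratio hn hm hD (expInt_posC_ne_zero hn hm) hW
      (expInt_posC_le_pow (by lia) hm hD)
  · rw [min_eq_right h, expInt_posC_swap]
    rw [mul_comm] at hD
    rw [mul_comm (√_)] at hW
    exact lower_lt_ratio hm hn hD (expInt_posC_ne_zero hm hn) hW
      (expInt_posC_le_pow (by lia) hn hD)

lemma sqrt_ratio_le {a b : ℝ} (ha : 0 < a) (hab : a ≤ b) :
    176 * (√a * √b) ≤ 7000 / √(a + 1) * (0.04 * ((a + 1) * (b + 1)) / √(a + b)) := by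
  have hb := ha.trans_le hab
  have h : √a * √b * √(a + 1) * √(a + b) ≤ 1.5 * ((a + 1) * (b + 1)) := by
    rw [← Real.sqrt_mul (by positivity), ← Real.sqrt_mul (by positivity),
      ← Real.sqrt_mul (by positivity)]
    refine Real.sqrt_le_iff.2 ⟨by positivity, ?_⟩
    calc a * b * (a + 1) * (a + b) ≤ (a + 1) * (b + 1) * (a + 1) * (2 * (b + 1)) := by
          gcongr <;> linarith
      _ = 2 * ((a + 1) * (b + 1)) ^ 2 := by ring
      _ ≤ _ := by rw [mul_pow 1.5]; gcongr; norm_num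
  have h1 : 0 < √(a + 1) := Real.sqrt_pos.2 (by linarith)
  have h2 : 0 < √(a + b) := Real.sqrt_pos.2 (by linarith)
  have h3 : 0 < (a + 1) * (b + 1) := by positivity
  rw [div_mul_div_comm, le_div_iff₀ (by positivity)]
  linarith

lemma upper_bound_pow_gt (hn : 3 ≤ n) (hm : 3 ≤ m)
    (hD : (n + 1).choose 2 * (m + 1).choose 2 = D + 1) :
    expInt (sqC (Fin n) (Fin m)) (btr (Fin n) (Fin m)) /
        expInt (posC (Fin n) (Fin m)) (btr (Fin n) (Fin m)) <
      ENNReal.ofReal (14000 / √((min n m : ℕ) + 1)) ^ D := by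
  have hn0 : (3 : ℝ) ≤ n := by exact_mod_cast hn
  have hm0 : (3 : ℝ) ≤ m := by exact_mod_cast hm
  set μ : ℝ := ((min n m : ℕ) : ℝ) with hμ
  have hμ0 : 3 ≤ μ := by rw [hμ]; exact_mod_cast le_min hn hm
  set w := √(μ + 1) with hw
  have hw1 : 1 ≤ w := Real.one_le_sqrt.2 (by linarith)
  have hr : 0 < √((n : ℝ) + m) := Real.sqrt_pos.2 (by linarith)
  have hbase : 176 * (√n * √m) ≤
      7000 / w * (0.04 * (((n : ℝ) + 1) * (m + 1)) / √(n + m)) := by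
    rcases le_total n m with h | h
    · rw [hw, hμ, min_eq_left h]
      exact sqrt_ratio_le (by linarith) (by exact_mod_cast h)
    · rw [hw, hμ, min_eq_right h, mul_comm (√_), mul_comm ((n : ℝ) + 1), add_comm (n : ℝ) m]
      exact sqrt_ratio_le (by linarith) (by exact_mod_cast h)
  have hD16 : 16 ≤ D := by
    have h1 := four_mul_card hD
    have : (16 : ℝ) ≤ D := by
      push_cast at h1
      have : (3 : ℝ) * 3 * ((3 + 1) * (3 + 1)) ≤ n * m * ((n + 1) * (m + 1)) := by gcongr
      linarith
    exact_mod_cast this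
  set B := 0.04 * (((n : ℝ) + 1) * (m + 1)) / √(n + m) with hB
  have hB0 : 0 < B := by positivity
  refine (ENNReal.div_lt_iff (.inl (expInt_posC_ne_zero hn hm))
    (.inl (expInt_posC_ne_top hn hm))).2 ?_
  calc _ ≤ ENNReal.ofReal (2 * (176 * (√n * √m)) ^ (D + 1)) := expInt_sqC_le_pow hn hm hD
    _ < ENNReal.ofReal ((14000 / w) ^ D * (1 / 4 * B ^ (D + 1))) := by
        refine (ENNReal.ofReal_lt_ofReal_iff (by positivity)).2 ?_
        calc 2 * (176 * (√n * √m)) ^ (D + 1) ≤ 2 * (7000 / w * B) ^ (D + 1) := by gcongr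
          _ = (7000 / w) ^ D * B ^ (D + 1) * (14000 / w) := by rw [mul_pow, pow_succ (7000 / w)]; ring
          _ ≤ (7000 / w) ^ D * B ^ (D + 1) * 14000 := by
              gcongr; exact div_le_self (by norm_num) hw1
          _ < (7000 / w) ^ D * B ^ (D + 1) * (1 / 4 * 2 ^ D) := by
              gcongr
              calc (14000 : ℝ) < 1 / 4 * 2 ^ 16 := by norm_num
                _ ≤ _ := by gcongr; norm_num
          _ = _ := by
              rw [show (14000 : ℝ) / w = 7000 / w * 2 by ring, mul_pow]; ring
    _ = ENNReal.ofReal (14000 / w) ^ D * ENNReal.ofReal (1 / 4 * B ^ (D + 1)) := by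
        rw [ENNReal.ofReal_mul (by positivity), ENNReal.ofReal_pow (by positivity)]
    _ ≤ _ := by gcongr; exact le_expInt_posC (by lia) (by lia) hD

/-- The two-sided bound for the ratio of the volumes. -/
lemma ratio_bounds (hn : 3 ≤ n) (hm : 3 ≤ m) (hD : D = (n + 1).choose 2 * (m + 1).choose 2 - 1)
    {σ : Measure (Fin n → ℝ)} {τ : Measure (Fin m → ℝ)}
    (hσ : IsSphereMeasure n σ) (hτ : IsSphereMeasure m τ)
    {ψ : (Fin D → ℝ) →ₗ[ℝ] MvPolynomial (Fin n ⊕ Fin m) ℝ}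
    (hψ : IsUnitaryParam n m D σ τ (MSet n m 1 1 σ τ) ψ) :
    ENNReal.ofReal (0.000105 / √(min n m : ℕ)) <
        (volume (⇑ψ ⁻¹' tilde n m 1 1 σ τ (SqSet n m 1 1)) /
          volume (⇑ψ ⁻¹' tilde n m 1 1 σ τ (PosSet n m 1 1))) ^ ((1 : ℝ) / D) ∧
      (volume (⇑ψ ⁻¹' tilde n m 1 1 σ τ (SqSet n m 1 1)) /
          volume (⇑ψ ⁻¹' tilde n m 1 1 σ τ (PosSet n m 1 1))) ^ ((1 : ℝ) / D) <
        ENNReal.ofReal (14000 / √((min n m : ℕ) + 1)) := by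
  have h6 (k : ℕ) (hk : 3 ≤ k) : 6 ≤ (k + 1).choose 2 :=
    Nat.choose_le_choose 2 (by lia : 4 ≤ k + 1)
  have h36 := Nat.mul_le_mul (h6 n hn) (h6 m hm)
  have hD' : (n + 1).choose 2 * (m + 1).choose 2 = D + 1 := by lia
  have hD0 : (0 : ℝ) < D := by exact_mod_cast (by lia : 0 < D)
  rw [volume_div_volume_eq (by lia) (by lia) hD' hσ hτ hψ, one_div,
    ENNReal.lt_rpow_inv_iff hD0, ENNReal.rpow_inv_lt_iff hD0, ENNReal.rpow_natCast,
    ENNReal.rpow_natCast]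
  exact ⟨lower_bound_pow_lt hn hm hD', upper_bound_pow_gt hn hm hD'⟩

end Ratio

lemma lower_constant_le {s : ℝ} (hs : 0 ≤ s) :
    3 * √3 / (2 ^ 10 * 7 ^ 2 * s) ≤ 0.000105 / s := by
  rw [← div_div]
  gcongr
  have : √3 ≤ 1.7321 := Real.sqrt_le_iff.2 ⟨by norm_num, by norm_num⟩
  rw [div_le_iff₀ (by norm_num)]
  linarith

lemma le_upper_constant {s : ℝ} (hs : 0 ≤ s) :
    14000 / s ≤ 2 ^ 12 * 5 ^ 2 * 6 ^ ((1 : ℝ) / 2) * 10 ^ ((2 : ℝ) / 9) / (3 ^ 3 * s) := by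
  have h6 : (2.4 : ℝ) ≤ 6 ^ ((1 : ℝ) / 2) := by
    rw [← Real.sqrt_eq_rpow]
    exact Real.le_sqrt_of_sq_le (by norm_num)
  have h10 : (1.6 : ℝ) ≤ 10 ^ ((2 : ℝ) / 9) := by
    rw [show (2 : ℝ) / 9 = 2 * 9⁻¹ by norm_num, Real.rpow_mul (by norm_num),
      Real.le_rpow_inv_iff_of_pos (by norm_num) (by positivity) (by norm_num)]
    norm_num
  rw [← div_div]
  gcongr
  rw [le_div_iff₀ (by norm_num)]
  calc (14000 : ℝ) * 3 ^ 3 ≤ 2 ^ 12 * 5 ^ 2 * 2.4 * 1.6 := by norm_num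
    _ ≤ _ := by gcongr

end BiformVolume

open BiformPaper in
/-- **Theorem (ratio of volumes for biquadratic biforms).** For integers `n, m ≥ 3`:
`3√3/(2^{10}·7²·√(min(n,m))) < (Vol S̃q / Vol P̃os)^{1/D_𝓜}
  < 2^{12}·5²·6^{1/2}·10^{2/9}/(3³·√(min(n,m)+1))`,
where `D_𝓜 = C(n+1,2)·C(m+1,2) − 1`.  In particular
`(Vol S̃q / Vol P̃os)^{1/D_𝓜} = Θ(min(n,m)^{-1/2})`. -/
theorem statement4 :
    (∀ n m : ℕ, 3 ≤ n → 3 ≤ m → ∀ D : ℕ,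
      D = Nat.choose (n + 1) 2 * Nat.choose (m + 1) 2 - 1 →
      ∀ (σ₁ : Measure (Fin n → ℝ)) (σ₂ : Measure (Fin m → ℝ)),
        IsSphereMeasure n σ₁ → IsSphereMeasure m σ₂ →
      ∀ ψ : (Fin D → ℝ) →ₗ[ℝ] MvPolynomial (Fin n ⊕ Fin m) ℝ,
        IsUnitaryParam n m D σ₁ σ₂ (MSet n m 1 1 σ₁ σ₂) ψ →
      ENNReal.ofReal (3 * Real.sqrt 3 /
          ((2 : ℝ) ^ (10 : ℕ) * (7 : ℝ) ^ 2 * Real.sqrt ((min n m : ℕ) : ℝ))) <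
        (volume (⇑ψ ⁻¹' tilde n m 1 1 σ₁ σ₂ (SqSet n m 1 1)) /
            volume (⇑ψ ⁻¹' tilde n m 1 1 σ₁ σ₂ (PosSet n m 1 1))) ^ ((1 : ℝ) / (D : ℝ)) ∧
      (volume (⇑ψ ⁻¹' tilde n m 1 1 σ₁ σ₂ (SqSet n m 1 1)) /
          volume (⇑ψ ⁻¹' tilde n m 1 1 σ₁ σ₂ (PosSet n m 1 1))) ^ ((1 : ℝ) / (D : ℝ)) <
        ENNReal.ofReal ((2 : ℝ) ^ (12 : ℕ) * (5 : ℝ) ^ 2 * (6 : ℝ) ^ ((1 : ℝ) / 2) *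
          (10 : ℝ) ^ ((2 : ℝ) / 9) / ((3 : ℝ) ^ 3 * Real.sqrt (((min n m : ℕ) : ℝ) + 1)))) ∧
    -- the `Θ(min(n,m)^{-1/2})` asymptotics:
    (∃ c₁ c₂ : ℝ, 0 < c₁ ∧ 0 < c₂ ∧
      ∀ n m : ℕ, 3 ≤ n → 3 ≤ m → ∀ D : ℕ,
        D = Nat.choose (n + 1) 2 * Nat.choose (m + 1) 2 - 1 →
        ∀ (σ₁ : Measure (Fin n → ℝ)) (σ₂ : Measure (Fin m → ℝ)),
          IsSphereMeasure n σ₁ → IsSphereMeasure m σ₂ →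
        ∀ ψ : (Fin D → ℝ) →ₗ[ℝ] MvPolynomial (Fin n ⊕ Fin m) ℝ,
          IsUnitaryParam n m D σ₁ σ₂ (MSet n m 1 1 σ₁ σ₂) ψ →
        ENNReal.ofReal (c₁ * ((min n m : ℕ) : ℝ) ^ (-(1 : ℝ) / 2)) ≤
          (volume (⇑ψ ⁻¹' tilde n m 1 1 σ₁ σ₂ (SqSet n m 1 1)) /
              volume (⇑ψ ⁻¹' tilde n m 1 1 σ₁ σ₂ (PosSet n m 1 1))) ^ ((1 : ℝ) / (D : ℝ)) ∧
        (volume (⇑ψ ⁻¹' tilde n m 1 1 σ₁ σ₂ (SqSet n m 1 1)) /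
            volume (⇑ψ ⁻¹' tilde n m 1 1 σ₁ σ₂ (PosSet n m 1 1))) ^ ((1 : ℝ) / (D : ℝ)) ≤
          ENNReal.ofReal (c₂ * ((min n m : ℕ) : ℝ) ^ (-(1 : ℝ) / 2))) := by
  refine ⟨fun n m hn hm D hD σ₁ σ₂ h₁ h₂ ψ hψ => ?_,
    0.000105, 14000, by norm_num, by norm_num, fun n m hn hm D hD σ₁ σ₂ h₁ h₂ ψ hψ => ?_⟩ <;>
  obtain ⟨hl, hu⟩ := BiformVolume.ratio_bounds hn hm hD h₁ h₂ hψ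
  · exact ⟨(ENNReal.ofReal_le_ofReal (BiformVolume.lower_constant_le (Real.sqrt_nonneg _))).trans_lt
      hl, hu.trans_le
        (ENNReal.ofReal_le_ofReal (BiformVolume.le_upper_constant (Real.sqrt_nonneg _)))⟩
  · have hμ : (0 : ℝ) < (min n m : ℕ) := by exact_mod_cast (by lia : 0 < min n m)
    rw [neg_div, Real.rpow_neg hμ.le, ← Real.sqrt_eq_rpow, ← div_eq_mul_inv, ← div_eq_mul_inv]
    refine ⟨hl.le, hu.le.trans (ENNReal.ofReal_le_ofReal ?_)⟩
    gcongr
    linarith
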